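/- arXiv:2406.05280 — 2 statements merged into one kernel-verified Lean document; each statement's English description precedes it below -/
import Mathlib

section
/- There exists a numerical constant C > 0 with the following property. Let T > 0 and let (g(t))_{t∈[0,T]} be a family of finite nonnegative Borel measures on [0,∞) such that: (a) g(t)([0,∞)) = g(0)([0,∞)) for all t ∈ [0,T]; (b) g(t)({0}) = 0 for all t ∈ [0,T]; (c) for every ε > 0 the integrand of 𝒦(φ_ε, g(τ)) is g(τ)⊗g(τ)⊗g(τ)-integrable for each τ, the map τ ↦ 𝒦(φ_ε, g(τ)) is integrable on [0,T], and N₀(g(t),ε) − N₀(g(s),ε) = ∫_s^t 𝒦(φ_ε, g(τ)) dτ for all 0 ≤ s < t ≤ T. Then either \underline{N}_{1/2}(g(0)) = 0 or \overline{N}_{1/2}(g(0)) ≤ C / (T · \underline{N}_{1/2}(g(0))). -/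
open MeasureTheory Set
open scoped ENNReal

/-- The truncated quadratic test function `φ_ε`. -/
noncomputable def phiEps (ε x : ℝ) : ℝ := if x ≤ ε then (1 - x / ε) ^ 2 else 0

/-- `N₀(g,ε) = ∫_{[0,ε]} (1 - x/ε)² dg(x)` (real valued, for finite measures). -/
noncomputable def N0 (g : Measure ℝ) (ε : ℝ) : ℝ := ∫ x in Icc (0:ℝ) ε, (1 - x / ε) ^ 2 ∂g

/-- `N₀(g,ε)` valued in `[0,∞]`. -/
noncomputable def N0e (g : Measure ℝ) (ε : ℝ) : ℝ≥0∞ :=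
  ∫⁻ x in Icc (0:ℝ) ε, ENNReal.ofReal ((1 - x / ε) ^ 2) ∂g

/-- `N_α(g,ε) = ε^{-α} N₀(g,ε)`, valued in `[0,∞]`. -/
noncomputable def NalphaE (g : Measure ℝ) (α ε : ℝ) : ℝ≥0∞ :=
  ENNReal.ofReal (ε ^ (-α)) * N0e g ε

/-- `\underline{N}_α(g,ε) = inf_{0 < δ ≤ ε} N_α(g,δ)`. -/
noncomputable def uNe (g : Measure ℝ) (α ε : ℝ) : ℝ≥0∞ := ⨅ δ ∈ Ioc (0:ℝ) ε, NalphaE g α δ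

/-- `\overline{N}_α(g,ε) = sup_{0 < δ ≤ ε} N_α(g,δ)`. -/
noncomputable def oNe (g : Measure ℝ) (α ε : ℝ) : ℝ≥0∞ := ⨆ δ ∈ Ioc (0:ℝ) ε, NalphaE g α δ

/-- `\underline{N}_α(g) = lim_{ε→0⁺} \underline{N}_α(g,ε)`, a monotone limit in `[0,∞]`. -/
noncomputable def uNlim (g : Measure ℝ) (α : ℝ) : ℝ≥0∞ := ⨆ ε ∈ Ioi (0:ℝ), uNe g α ε

/-- `\overline{N}_α(g) = lim_{ε→0⁺} \overline{N}_α(g,ε)`, a monotone limit in `[0,∞]`. -/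
noncomputable def oNlim (g : Measure ℝ) (α : ℝ) : ℝ≥0∞ := ⨅ ε ∈ Ioi (0:ℝ), oNe g α ε

/-- The integrand of the collision functional `𝒦(φ_ε, g)` of the 4-wave kinetic equation,
with `Φ = min{√ω₁, √ω₂, √ω₃, √((ω₁+ω₂-ω₃)₊)}`. -/
noncomputable def wkeKernel (ε : ℝ) (ω : ℝ × ℝ × ℝ) : ℝ :=
  (min (Real.sqrt ω.1) (min (Real.sqrt ω.2.1) (min (Real.sqrt ω.2.2)
      (Real.sqrt (max (ω.1 + ω.2.1 - ω.2.2) 0)))) /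
    (Real.sqrt ω.1 * Real.sqrt ω.2.1 * Real.sqrt ω.2.2)) *
  (phiEps ε (max (ω.1 + ω.2.1 - ω.2.2) 0) + phiEps ε ω.2.2 - phiEps ε ω.1 - phiEps ε ω.2.1)

/-- The collision functional `𝒦(φ_ε, g)` as a triple integral over `(0,∞)³` against `g⊗g⊗g`. -/
noncomputable def Kcoll (g : Measure ℝ) (ε : ℝ) : ℝ :=
  ∫ ω in (Ioi (0:ℝ)) ×ˢ ((Ioi (0:ℝ)) ×ˢ (Ioi (0:ℝ))), wkeKernel ε ω ∂(g.prod (g.prod g))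

/-!
Summing the integrand of `𝒦(φ_ε, g)` over the cyclic permutations of `x ≤ y ≤ z` gives, up to a
nonnegative term and the factor `1/√(yz)`, the second difference of the convex function `φ_ε` at `z`
with step `y - x`. Hence `𝒦 ≥ 0`, so that `N₀(g(t), ε)` increases in `t`, and `𝒦(φ_ε, g)` is
bounded below by a multiple of `ε⁻¹ g(0, ε/256] g(ε/64, ε]²`.

Let `A = \underline{N}_{1/2}(g(0), ε)`, so that `g(t)(0, δ] ≥ A √δ` for all `δ ≤ ε`. Some shell
`(ε 64^{-k-1}, ε 64^{-k}]` carries a fraction of at least `2^{-k-1}` of the mass of `(0, ε]`;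
summing over the radii `ε 64^{-k}` with weights `2^{-k}` gives, for `s < t`,
`N₀(g(t), ε) ≥ c A ε^{-1/2} (t - s) N₀(g(s), ε)²`. Such a function doubles over and over within a
finite time unless `T A ε^{-1/2} N₀(g(0), ε)` is bounded.
-/

section TestFunction

lemma add_le_add_of_convexOn_univ {f : ℝ → ℝ} (hf : ConvexOn ℝ univ f) {x y h : ℝ}
    (hxy : x ≤ y) (hh : 0 ≤ h) : f x + f y ≤ f (x - h) + f (y + h) := by
  rcases hh.eq_or_lt with rfl | hpos
  · simp only [sub_zero, add_zero, le_refl]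
  have hw : 0 < y - x + 2 * h := by linarith
  set θ := h / (y - x + 2 * h) with hθ
  have hθ0 : 0 ≤ θ := by positivity
  have hθ1 : 0 ≤ 1 - θ := by
    rw [sub_nonneg, hθ, div_le_one hw]
    linarith
  have hθw : θ * (y - x + 2 * h) = h := div_mul_cancel₀ h hw.ne'
  have hx : (1 - θ) * (x - h) + θ * (y + h) = x := by linear_combination hθw
  have hy : θ * (x - h) + (1 - θ) * (y + h) = y := by linarith
  have hfx := hf.2 (mem_univ (x - h)) (mem_univ (y + h)) hθ1 hθ0 (by ring)
  have hfy := hf.2 (mem_univ (x - h)) (mem_univ (y + h)) hθ0 hθ1 (by ring)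
  simp only [smul_eq_mul, hx, hy] at hfx hfy
  linarith

variable {ε : ℝ}

lemma phiEps_eq_max_sq (hε : 0 < ε) (x : ℝ) : phiEps ε x = max (1 - x / ε) 0 ^ 2 := by
  unfold phiEps
  split_ifs with hx
  · rw [max_eq_left (sub_nonneg.2 ((div_le_one hε).2 hx))]
  · rw [max_eq_right (sub_nonpos.2 ((one_le_div hε).2 (le_of_not_ge hx))), zero_pow two_ne_zero]

lemma convexOn_phiEps (hε : 0 < ε) : ConvexOn ℝ univ (phiEps ε) := by
  have hlin : ConvexOn ℝ univ fun x : ℝ => 1 - x / ε :=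
    ⟨convex_univ, fun x _ y _ a b _ _ hab => le_of_eq <| by
      simp only [smul_eq_mul]
      linear_combination -hab⟩
  have hmax : ConvexOn ℝ univ fun x : ℝ => max (1 - x / ε) 0 :=
    hlin.sup (convexOn_const 0 convex_univ)
  rw [funext (phiEps_eq_max_sq hε)]
  exact hmax.pow (fun _ _ => le_max_right _ _) 2

lemma two_mul_phiEps_add_sq_le (hε : 0 < ε) {z h : ℝ} (hz : z ≤ ε) (hh : 0 ≤ h) :
    2 * phiEps ε z + (h / ε) ^ 2 ≤ phiEps ε (z - h) + phiEps ε (z + h) := by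
  have hu : 0 ≤ 1 - z / ε := sub_nonneg.2 ((div_le_one hε).2 hz)
  have hv : 0 ≤ h / ε := div_nonneg hh hε.le
  simp only [phiEps_eq_max_sq hε, sub_div, add_div]
  generalize z / ε = u at *
  generalize h / ε = v at *
  rw [max_eq_left hu, max_eq_left (by linarith : 0 ≤ 1 - (u - v))]
  rcases le_total (1 - (u + v)) 0 with hneg | hpos
  · rw [max_eq_right hneg]
    nlinarith
  · rw [max_eq_left hpos]
    nlinarith

end TestFunction

section CyclicSum

variable {α E : Type*}

/-- The sum of `f` over the cyclic permutations of a triple, which symmetrises the integrand of the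
collision functional: integrals against `μ ⊗ μ ⊗ μ` do not distinguish `f` from a third of it. -/
def cyclicSum [Add E] (f : α × α × α → E) (ω : α × α × α) : E :=
  f ω + f (ω.2.1, ω.2.2, ω.1) + f (ω.2.2, ω.1, ω.2.1)

lemma cyclicSum_rotate [AddCommMonoid E] (f : α × α × α → E) (x y z : α) :
    cyclicSum f (y, z, x) = cyclicSum f (x, y, z) := by
  simp only [cyclicSum]
  abel

lemma cyclicSum_swap [AddCommMonoid E] {f : α × α × α → E}
    (hf : ∀ x y z, f (x, y, z) = f (y, x, z)) (x y z : α) :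
    cyclicSum f (x, y, z) = cyclicSum f (y, x, z) := by
  simp only [cyclicSum]
  rw [hf x y z, hf y z x, hf z x y]
  abel

variable [MeasurableSpace α]

/-- The cyclic rotation `(x, y, z) ↦ (y, z, x)` as a measurable equivalence; by its invariance
`μ ⊗ μ ⊗ μ` integrates all the terms of a `cyclicSum` alike. -/
def rotateTriple (α : Type*) [MeasurableSpace α] : α × α × α ≃ᵐ α × α × α :=
  MeasurableEquiv.prodComm.trans MeasurableEquiv.prodAssoc

lemma measurePreserving_rotateTriple (μ : Measure α) [SFinite μ] :
    MeasurePreserving (rotateTriple α) (μ.prod (μ.prod μ)) (μ.prod (μ.prod μ)) :=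
  (measurePreserving_prodAssoc μ μ μ).comp Measure.measurePreserving_swap

variable [NormedAddCommGroup E] {μ : Measure α} [SFinite μ] {f : α × α × α → E}

lemma integrable_cyclicSum (hf : Integrable f (μ.prod (μ.prod μ))) :
    Integrable (cyclicSum f) (μ.prod (μ.prod μ)) := by
  have hrot := measurePreserving_rotateTriple μ
  have hf₁ := hrot.integrable_comp_of_integrable hf
  exact (hf.add hf₁).add (hrot.integrable_comp_of_integrable hf₁)

lemma integral_cyclicSum [NormedSpace ℝ E] (hf : Integrable f (μ.prod (μ.prod μ))) :
    ∫ ω, cyclicSum f ω ∂(μ.prod (μ.prod μ)) = 3 • ∫ ω, f ω ∂(μ.prod (μ.prod μ)) := by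
  have hrot := measurePreserving_rotateTriple μ
  have hf₁ := hrot.integrable_comp_of_integrable hf
  have hf₂ := hrot.integrable_comp_of_integrable hf₁
  calc ∫ ω, cyclicSum f ω ∂(μ.prod (μ.prod μ))
      = ∫ ω, f ω ∂(μ.prod (μ.prod μ)) + ∫ ω, (f ∘ rotateTriple α) ω ∂(μ.prod (μ.prod μ)) +
          ∫ ω, ((f ∘ rotateTriple α) ∘ rotateTriple α) ω ∂(μ.prod (μ.prod μ)) := by
        rw [← integral_add' hf hf₁, ← integral_add' (hf.add hf₁) hf₂]
        rfl
    _ = 3 • ∫ ω, f ω ∂(μ.prod (μ.prod μ)) := by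
        have hf₁_eq : ∫ ω, (f ∘ rotateTriple α) ω ∂(μ.prod (μ.prod μ)) =
            ∫ ω, f ω ∂(μ.prod (μ.prod μ)) := hrot.integral_comp' f
        have hf₂_eq : ∫ ω, ((f ∘ rotateTriple α) ∘ rotateTriple α) ω ∂(μ.prod (μ.prod μ)) =
            ∫ ω, (f ∘ rotateTriple α) ω ∂(μ.prod (μ.prod μ)) :=
          hrot.integral_comp' (f ∘ rotateTriple α)
        rw [hf₂_eq, hf₁_eq]
        abel

end CyclicSum

section Kernel

variable {ε x y z : ℝ}

lemma wkeKernel_swap (ε x y z : ℝ) : wkeKernel ε (x, y, z) = wkeKernel ε (y, x, z) := by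
  simp only [wkeKernel]
  rw [min_left_comm, add_comm x y, mul_comm √x]
  ring

lemma wkeKernel_nonneg_of_le (hε : 0 < ε) (hxy : x ≤ y) (hyz : y ≤ z) :
    0 ≤ wkeKernel ε (x, y, z) := by
  simp only [wkeKernel]
  rcases le_total (x + y - z) 0 with hneg | hpos
  · simp only [max_eq_right hneg, Real.sqrt_zero, min_eq_right (Real.sqrt_nonneg _), zero_div,
      zero_mul, le_refl]
  · have hconv := add_le_add_of_convexOn_univ (convexOn_phiEps hε) hxy (sub_nonneg.2 hyz)
    rw [show x - (z - y) = x + y - z by ring, add_sub_cancel] at hconv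
    rw [max_eq_left hpos]
    exact mul_nonneg (by positivity) (by linarith)

lemma wkeKernel_eq_of_mid_last (ε : ℝ) (hx : 0 < x) (hxy : x ≤ y) (hyz : y ≤ z) :
    wkeKernel ε (x, z, y) =
      (phiEps ε (z - (y - x)) + phiEps ε y - phiEps ε x - phiEps ε z) / (√y * √z) := by
  have hy := hx.trans_le hxy
  have hz := hy.trans_le hyz
  have hmin : min √x (min √z (min √y √(x + z - y))) = √x :=
    min_eq_left <| le_min (Real.sqrt_le_sqrt (hxy.trans hyz)) <|
      le_min (Real.sqrt_le_sqrt hxy) (Real.sqrt_le_sqrt (by linarith))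
  simp only [wkeKernel, max_eq_left (by linarith : 0 ≤ x + z - y), hmin]
  rw [show z - (y - x) = x + z - y by ring]
  field_simp

lemma wkeKernel_eq_of_min_last (ε : ℝ) (hx : 0 < x) (hxy : x ≤ y) (hxz : x ≤ z) :
    wkeKernel ε (y, z, x) =
      (phiEps ε (z + (y - x)) + phiEps ε x - phiEps ε y - phiEps ε z) / (√y * √z) := by
  have hy := hx.trans_le hxy
  have hz := hx.trans_le hxz
  have hmin : min √y (min √z (min √x √(y + z - x))) = √x := by
    rw [min_eq_left (Real.sqrt_le_sqrt (by linarith)), min_eq_right (Real.sqrt_le_sqrt hxz),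
      min_eq_right (Real.sqrt_le_sqrt hxy)]
  simp only [wkeKernel, max_eq_left (by linarith : 0 ≤ y + z - x), hmin]
  rw [show z + (y - x) = y + z - x by ring]
  field_simp

lemma secondDifference_le_cyclicSum_wkeKernel (hε : 0 < ε) (hx : 0 < x) (hxy : x ≤ y)
    (hyz : y ≤ z) :
    (phiEps ε (z - (y - x)) + phiEps ε (z + (y - x)) - 2 * phiEps ε z) / (√y * √z) ≤
      cyclicSum (wkeKernel ε) (x, y, z) := by
  have hnonneg := wkeKernel_nonneg_of_le hε hxy hyz
  simp only [cyclicSum]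
  rw [wkeKernel_eq_of_min_last ε hx hxy (hxy.trans hyz), wkeKernel_swap ε z x y,
    wkeKernel_eq_of_mid_last ε hx hxy hyz, add_assoc, ← add_div]
  refine le_add_of_nonneg_of_le hnonneg (le_of_eq ?_)
  ring

lemma cyclicSum_wkeKernel_nonneg_of_le (hε : 0 < ε) (hx : 0 < x) (hxy : x ≤ y) (hyz : y ≤ z) :
    0 ≤ cyclicSum (wkeKernel ε) (x, y, z) := by
  refine le_trans ?_ (secondDifference_le_cyclicSum_wkeKernel hε hx hxy hyz)
  have hconv := add_le_add_of_convexOn_univ (convexOn_phiEps hε) (le_refl z) (sub_nonneg.2 hxy)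
  exact div_nonneg (by linarith) (by positivity)

lemma cyclicSum_wkeKernel_nonneg (hε : 0 < ε) (hx : 0 < x) (hy : 0 < y) (hz : 0 < z) :
    0 ≤ cyclicSum (wkeKernel ε) (x, y, z) := by
  wlog hxy : x ≤ y generalizing x y
  · rw [cyclicSum_swap (wkeKernel_swap ε)]
    exact this hy hx (le_of_not_ge hxy)
  rcases le_total y z with hyz | hzy
  · exact cyclicSum_wkeKernel_nonneg_of_le hε hx hxy hyz
  rcases le_total x z with hxz | hzx
  · rw [cyclicSum_swap (wkeKernel_swap ε), ← cyclicSum_rotate]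
    exact cyclicSum_wkeKernel_nonneg_of_le hε hx hxz hzy
  · rw [cyclicSum_rotate]
    exact cyclicSum_wkeKernel_nonneg_of_le hε hz hzx hxy

lemma le_cyclicSum_wkeKernel {a b : ℝ} (hε : 0 < ε) (hab : a ≤ b) (hx : x ∈ Ioc 0 a)
    (hy : y ∈ Ioc b ε) (hz : z ∈ Ioc b ε) :
    ((b - a) / ε) ^ 2 / ε ≤ cyclicSum (wkeKernel ε) (x, y, z) := by
  wlog hyz : y ≤ z generalizing y z
  · rw [cyclicSum_swap (wkeKernel_swap ε), ← cyclicSum_rotate]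
    exact this hz hy (le_of_not_ge hyz)
  have hxy : x ≤ y := (hx.2.trans hab).trans hy.1.le
  have hy₀ : 0 < y := hx.1.trans_le hxy
  have hdist : (b - a) / ε ≤ (y - x) / ε := by
    gcongr
    exacts [hy.1.le, hx.2]
  have hsecond := two_mul_phiEps_add_sq_le hε hz.2 (sub_nonneg.2 hxy)
  have hsqrt : √y * √z ≤ ε :=
    calc √y * √z ≤ √ε * √ε :=
          mul_le_mul (Real.sqrt_le_sqrt hy.2) (Real.sqrt_le_sqrt hz.2) (by positivity)
            (by positivity)
      _ = ε := Real.mul_self_sqrt hε.le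
  calc ((b - a) / ε) ^ 2 / ε ≤ ((y - x) / ε) ^ 2 / ε := by
        gcongr
    _ ≤ (phiEps ε (z - (y - x)) + phiEps ε (z + (y - x)) - 2 * phiEps ε z) / (√y * √z) :=
        div_le_div₀ (by nlinarith [sq_nonneg ((y - x) / ε)]) (by linarith)
          (mul_pos (Real.sqrt_pos.2 hy₀) (Real.sqrt_pos.2 (hy₀.trans_le hyz))) hsqrt
    _ ≤ cyclicSum (wkeKernel ε) (x, y, z) :=
        secondDifference_le_cyclicSum_wkeKernel hε hx.1 hxy hyz

end Kernel

section CollisionFunctional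

variable {g : Measure ℝ} [IsLocallyFiniteMeasure g] {ε : ℝ}

lemma integrableOn_cyclicSum_wkeKernel
    (hint : IntegrableOn (wkeKernel ε) (Ioi 0 ×ˢ Ioi 0 ×ˢ Ioi 0) (g.prod (g.prod g))) :
    IntegrableOn (cyclicSum (wkeKernel ε)) (Ioi 0 ×ˢ Ioi 0 ×ˢ Ioi 0) (g.prod (g.prod g)) := by
  rw [IntegrableOn, ← Measure.prod_restrict, ← Measure.prod_restrict] at hint ⊢
  exact integrable_cyclicSum hint

lemma setIntegral_cyclicSum_wkeKernel
    (hint : IntegrableOn (wkeKernel ε) (Ioi 0 ×ˢ Ioi 0 ×ˢ Ioi 0) (g.prod (g.prod g))) :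
    ∫ ω in Ioi 0 ×ˢ Ioi 0 ×ˢ Ioi 0, cyclicSum (wkeKernel ε) ω ∂(g.prod (g.prod g)) =
      3 * Kcoll g ε := by
  rw [IntegrableOn, ← Measure.prod_restrict, ← Measure.prod_restrict] at hint
  rw [Kcoll, ← Measure.prod_restrict, ← Measure.prod_restrict, integral_cyclicSum hint,
    nsmul_eq_mul, Nat.cast_ofNat]

lemma Kcoll_nonneg (hε : 0 < ε)
    (hint : IntegrableOn (wkeKernel ε) (Ioi 0 ×ˢ Ioi 0 ×ˢ Ioi 0) (g.prod (g.prod g))) :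
    0 ≤ Kcoll g ε := by
  have hpos : 0 ≤ 3 * Kcoll g ε := by
    rw [← setIntegral_cyclicSum_wkeKernel hint]
    exact setIntegral_nonneg (measurableSet_Ioi.prod (measurableSet_Ioi.prod measurableSet_Ioi))
      fun _ hω => cyclicSum_wkeKernel_nonneg hε hω.1 hω.2.1 hω.2.2
  linarith

lemma mul_measureReal_le_Kcoll {a b : ℝ} (hε : 0 < ε) (hb : 0 ≤ b) (hab : a ≤ b)
    (hint : IntegrableOn (wkeKernel ε) (Ioi 0 ×ˢ Ioi 0 ×ˢ Ioi 0) (g.prod (g.prod g))) :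
    ((b - a) / ε) ^ 2 / ε * (g.real (Ioc 0 a) * g.real (Ioc b ε) ^ 2) ≤ 3 * Kcoll g ε := by
  have hcyc := integrableOn_cyclicSum_wkeKernel hint
  have hsub : Ioc 0 a ×ˢ Ioc b ε ×ˢ Ioc b ε ⊆ Ioi (0 : ℝ) ×ˢ Ioi (0 : ℝ) ×ˢ Ioi (0 : ℝ) :=
    prod_mono Ioc_subset_Ioi_self (prod_mono (Ioc_subset_Ioi_self.trans (Ioi_subset_Ioi hb))
      (Ioc_subset_Ioi_self.trans (Ioi_subset_Ioi hb)))
  have hmeas : MeasurableSet (Ioc 0 a ×ˢ Ioc b ε ×ˢ Ioc b ε) :=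
    measurableSet_Ioc.prod (measurableSet_Ioc.prod measurableSet_Ioc)
  have hfin : (g.prod (g.prod g)) (Ioc 0 a ×ˢ Ioc b ε ×ˢ Ioc b ε) ≠ ∞ := by
    simp only [Measure.prod_prod]
    exact ENNReal.mul_ne_top measure_Ioc_lt_top.ne
      (ENNReal.mul_ne_top measure_Ioc_lt_top.ne measure_Ioc_lt_top.ne)
  calc ((b - a) / ε) ^ 2 / ε * (g.real (Ioc 0 a) * g.real (Ioc b ε) ^ 2)
      = ((b - a) / ε) ^ 2 / ε * (g.prod (g.prod g)).real (Ioc 0 a ×ˢ Ioc b ε ×ˢ Ioc b ε) := by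
        rw [measureReal_prod_prod, measureReal_prod_prod, sq (g.real (Ioc b ε))]
    _ ≤ ∫ ω in Ioc 0 a ×ˢ Ioc b ε ×ˢ Ioc b ε, cyclicSum (wkeKernel ε) ω ∂(g.prod (g.prod g)) :=
        setIntegral_ge_of_const_le_real hmeas hfin
          (fun _ hω => le_cyclicSum_wkeKernel hε hab hω.1 hω.2.1 hω.2.2) (hcyc.mono_set hsub)
    _ ≤ ∫ ω in Ioi 0 ×ˢ Ioi 0 ×ˢ Ioi 0, cyclicSum (wkeKernel ε) ω ∂(g.prod (g.prod g)) :=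
        setIntegral_mono_set hcyc
          ((ae_restrict_mem
            (measurableSet_Ioi.prod (measurableSet_Ioi.prod measurableSet_Ioi))).mono
            fun _ hω => cyclicSum_wkeKernel_nonneg hε hω.1 hω.2.1 hω.2.2) hsub.eventuallyLE
    _ = 3 * Kcoll g ε := setIntegral_cyclicSum_wkeKernel hint

end CollisionFunctional

section NearZeroMass

variable {g : Measure ℝ} {δ ε : ℝ}

lemma N0_nonneg (g : Measure ℝ) (ε : ℝ) : 0 ≤ N0 g ε :=
  integral_nonneg fun _ => sq_nonneg _

lemma oNlim_mul_uNlim_le {α : ℝ} {c : ℝ≥0∞}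
    (h : ∀ ε, 0 < ε → NalphaE g α ε * uNe g α ε ≤ c) : oNlim g α * uNlim g α ≤ c := by
  simp only [uNlim, ENNReal.mul_iSup]
  refine iSup₂_le fun ε (hε : 0 < ε) => ?_
  calc oNlim g α * uNe g α ε ≤ oNe g α ε * uNe g α ε := by
        gcongr
        exact iInf₂_le ε hε
    _ ≤ c := by
        simp only [oNe, ENNReal.iSup_mul]
        refine iSup₂_le fun δ hδ => le_trans ?_ (h δ hδ.1)
        gcongr
        exact biInf_mono (Ioc_subset_Ioc_right hδ.2)

lemma integrableOn_one_sub_div_sq (g : Measure ℝ) [IsLocallyFiniteMeasure g] (ε : ℝ) :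
    IntegrableOn (fun x => (1 - x / ε) ^ 2) (Icc 0 ε) g :=
  ContinuousOn.integrableOn_compact isCompact_Icc (by fun_prop)

variable [IsLocallyFiniteMeasure g]

lemma N0_le_measureReal_Ioc (hg₀ : g {0} = 0) (hε : 0 < ε) : N0 g ε ≤ g.real (Ioc 0 ε) := by
  calc N0 g ε ≤ ∫ _ in Icc 0 ε, (1 : ℝ) ∂g :=
        setIntegral_mono_on (integrableOn_one_sub_div_sq g ε)
          (integrableOn_const measure_Icc_lt_top.ne) measurableSet_Icc fun x hx =>
          pow_le_one₀ (sub_nonneg.2 ((div_le_one hε).2 hx.2))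
            (sub_le_self 1 (div_nonneg hx.1 hε.le))
    _ = g.real (Ioc 0 ε) := by
        rw [setIntegral_const, smul_eq_mul, mul_one, measureReal_congr (Ioc_ae_eq_Icc' hg₀)]

lemma N0_mono (hδ : 0 < δ) (hδε : δ ≤ ε) : N0 g δ ≤ N0 g ε := by
  have hε := integrableOn_one_sub_div_sq g ε
  have hsub : Icc 0 δ ⊆ Icc 0 ε := Icc_subset_Icc_right hδε
  calc N0 g δ ≤ ∫ x in Icc 0 δ, (1 - x / ε) ^ 2 ∂g :=
        setIntegral_mono_on (integrableOn_one_sub_div_sq g δ) (hε.mono_set hsub)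
          measurableSet_Icc fun x hx =>
          pow_le_pow_left₀ (sub_nonneg.2 ((div_le_one hδ).2 hx.2))
            (sub_le_sub_left (div_le_div_of_nonneg_left hx.1 hδ hδε) 1) 2
    _ ≤ N0 g ε :=
        setIntegral_mono_set hε (ae_of_all _ fun _ => sq_nonneg _) hsub.eventuallyLE

lemma NalphaE_half_eq_ofReal (hε : 0 < ε) :
    NalphaE g (1 / 2) ε = ENNReal.ofReal (N0 g ε / √ε) := by
  have hN0e : N0e g ε = ENNReal.ofReal (N0 g ε) :=
    (ofReal_integral_eq_lintegral_ofReal (integrableOn_one_sub_div_sq g ε)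
      (ae_of_all _ fun _ => sq_nonneg _)).symm
  rw [NalphaE, hN0e, ← ENNReal.ofReal_mul (by positivity), Real.rpow_neg hε.le,
    ← Real.sqrt_eq_rpow, inv_mul_eq_div]

lemma toReal_uNe_half_mul_sqrt_le_N0 (hδ : 0 < δ) (hδε : δ ≤ ε) :
    (uNe g (1 / 2) ε).toReal * √δ ≤ N0 g δ := by
  have hle : uNe g (1 / 2) ε ≤ ENNReal.ofReal (N0 g δ / √δ) := by
    rw [← NalphaE_half_eq_ofReal hδ]
    exact iInf₂_le δ ⟨hδ, hδε⟩
  rw [← le_div_iff₀ (Real.sqrt_pos.2 hδ)]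
  exact ENNReal.toReal_le_of_le_ofReal (div_nonneg (N0_nonneg g δ) (Real.sqrt_nonneg δ)) hle

lemma uNe_half_ne_top (hε : 0 < ε) : uNe g (1 / 2) ε ≠ ∞ := by
  refine ne_top_of_le_ne_top ENNReal.ofReal_ne_top (b := ENNReal.ofReal (N0 g ε / √ε)) ?_
  rw [← NalphaE_half_eq_ofReal hε]
  exact iInf₂_le ε ⟨hε, le_rfl⟩

end NearZeroMass

section GeometricShells

variable {μ : Measure ℝ} [IsLocallyFiniteMeasure μ] {ε r : ℝ}

lemma iUnion_Ioc_mul_pow (hε : 0 < ε) (hr₀ : 0 < r) (hr₁ : r < 1) :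
    ⋃ k : ℕ, Ioc (ε * r ^ (k + 1)) (ε * r ^ k) = Ioc 0 ε := by
  apply Subset.antisymm
  · exact iUnion_subset fun k =>
      Ioc_subset_Ioc (by positivity) (mul_le_of_le_one_right hε.le (pow_le_one₀ hr₀.le hr₁.le))
  · intro x hx
    obtain ⟨k, hlt, hle⟩ := exists_nat_pow_near_of_lt_one (div_pos hx.1 hε)
      ((div_le_one hε).2 hx.2) hr₀ hr₁
    exact mem_iUnion.2 ⟨k, (lt_div_iff₀' hε).1 hlt, (div_le_iff₀' hε).1 hle⟩

lemma hasSum_measureReal_Ioc_mul_pow (hε : 0 < ε) (hr₀ : 0 < r) (hr₁ : r < 1) :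
    HasSum (fun k : ℕ => μ.real (Ioc (ε * r ^ (k + 1)) (ε * r ^ k))) (μ.real (Ioc 0 ε)) := by
  have hanti : Antitone fun k : ℕ => ε * r ^ k :=
    (pow_right_anti₀ hr₀.le hr₁.le).const_mul hε.le
  have hsum : ∑' k : ℕ, μ (Ioc (ε * r ^ (k + 1)) (ε * r ^ k)) = μ (Ioc 0 ε) := by
    rw [← iUnion_Ioc_mul_pow hε hr₀ hr₁]
    exact (measure_iUnion hanti.pairwise_disjoint_on_Ioc_succ fun _ => measurableSet_Ioc).symm
  have hreal := ENNReal.hasSum_toReal (hsum.trans_ne measure_Ioc_lt_top.ne)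
  rwa [← ENNReal.tsum_toReal_eq fun _ => measure_Ioc_lt_top.ne, hsum] at hreal

lemma exists_measureReal_Ioc_mul_pow_ge (hε : 0 < ε) (hr₀ : 0 < r) (hr₁ : r < 1) :
    ∃ k : ℕ, μ.real (Ioc 0 ε) / 2 / 2 ^ k ≤ μ.real (Ioc (ε * r ^ (k + 1)) (ε * r ^ k)) := by
  by_contra! hlt
  exact lt_irrefl _ (hasSum_strict_mono (hasSum_measureReal_Ioc_mul_pow hε hr₀ hr₁)
    (hasSum_geometric_two' _) (Pi.lt_def.2 ⟨fun k => (hlt k).le, 0, hlt 0⟩))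

end GeometricShells

section ConcentrationGrowth

variable {g : Measure ℝ} [IsLocallyFiniteMeasure g] {ε A : ℝ}

lemma mul_measureReal_Ioc_sq_le_Kcoll (hg₀ : g {0} = 0) (hε : 0 < ε)
    (hA : A * √(ε / 256) ≤ N0 g (ε / 256))
    (hint : IntegrableOn (wkeKernel ε) (Ioi 0 ×ˢ Ioi 0 ×ˢ Ioi 0) (g.prod (g.prod g))) :
    3 / 2 ^ 20 * A / √ε * g.real (Ioc (ε / 64) ε) ^ 2 ≤ Kcoll g ε := by
  have hmass : A * (√ε / 16) ≤ g.real (Ioc 0 (ε / 256)) := by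
    rw [show √ε / 16 = √(ε / 256) by
      rw [Real.sqrt_div hε.le, show (256 : ℝ) = 16 ^ 2 by norm_num, Real.sqrt_sq (by norm_num)]]
    exact hA.trans (N0_le_measureReal_Ioc hg₀ (by positivity))
  have hcoll := mul_measureReal_le_Kcoll hε (a := ε / 256) (b := ε / 64) (by positivity)
    (by linarith) hint
  have hsqrt := Real.sqrt_pos.2 hε
  have hshift : ((ε / 64 - ε / 256) / ε) ^ 2 / ε = 9 / 65536 / ε := by
    field_simp
    norm_num
  have hscale : √ε / ε = 1 / √ε := Real.sqrt_div_self'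
  rw [hshift] at hcoll
  refine le_of_mul_le_mul_left (le_trans ?_ hcoll) zero_lt_three
  calc 3 * (3 / 2 ^ 20 * A / √ε * g.real (Ioc (ε / 64) ε) ^ 2)
      = 9 / 65536 * (A / 16) * (1 / √ε) * g.real (Ioc (ε / 64) ε) ^ 2 := by ring
    _ = 9 / 65536 / ε * (A * (√ε / 16) * g.real (Ioc (ε / 64) ε) ^ 2) := by
        rw [← hscale]
        ring
    _ ≤ 9 / 65536 / ε * (g.real (Ioc 0 (ε / 256)) * g.real (Ioc (ε / 64) ε) ^ 2) := by
        gcongr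

-- The shell ratio `1 / 64` makes the bound independent of `k`: the gain `√64` per shell exactly
-- offsets the weight `1 / 2` and the square of the mass fraction `1 / 2`, lost per shell.
lemma exists_mul_measureReal_Ioc_sq_le_Kcoll (hg₀ : g {0} = 0) (hε : 0 < ε) (hA₀ : 0 ≤ A)
    (hA : ∀ δ, 0 < δ → δ ≤ ε → A * √δ ≤ N0 g δ)
    (hint : ∀ δ, 0 < δ →
      IntegrableOn (wkeKernel δ) (Ioi 0 ×ˢ Ioi 0 ×ˢ Ioi 0) (g.prod (g.prod g))) :
    ∃ k : ℕ, 3 / 2 ^ 22 * A / √ε * g.real (Ioc 0 ε) ^ 2 ≤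
      (1 / 2) ^ k * Kcoll g (ε * (1 / 64) ^ k) := by
  obtain ⟨k, hk⟩ := exists_measureReal_Ioc_mul_pow_ge (μ := g) hε
    (show (0 : ℝ) < 1 / 64 by norm_num) (by norm_num)
  refine ⟨k, ?_⟩
  have hδ : 0 < ε * (1 / 64) ^ k := by positivity
  have hδε : ε * (1 / 64) ^ k ≤ ε :=
    mul_le_of_le_one_right hε.le (pow_le_one₀ (by norm_num) (by norm_num))
  have hsqrt : √(ε * (1 / 64) ^ k) = √ε / 8 ^ k := by
    rw [Real.sqrt_mul hε.le, show (1 / 64 : ℝ) = (1 / 8) ^ 2 by norm_num, ← pow_mul, mul_comm 2,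
      pow_mul, Real.sqrt_sq (by positivity), one_div, inv_pow, div_eq_mul_inv]
  have hcoll := mul_measureReal_Ioc_sq_le_Kcoll hg₀ hδ
    (hA _ (by positivity) (by linarith)) (hint _ hδ)
  rw [hsqrt, show ε * (1 / 64) ^ k / 64 = ε * (1 / 64) ^ (k + 1) by ring] at hcoll
  calc 3 / 2 ^ 22 * A / √ε * g.real (Ioc 0 ε) ^ 2
      = (1 / 2) ^ k * (3 / 2 ^ 20 * A / (√ε / 8 ^ k) * (g.real (Ioc 0 ε) / 2 / 2 ^ k) ^ 2) := by
        rw [show (8 : ℝ) = 2 ^ 3 by norm_num, ← pow_mul, one_div, inv_pow]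
        field_simp
        ring
    _ ≤ (1 / 2) ^ k * (3 / 2 ^ 20 * A / (√ε / 8 ^ k) *
          g.real (Ioc (ε * (1 / 64) ^ (k + 1)) (ε * (1 / 64) ^ k)) ^ 2) := by gcongr
    _ ≤ (1 / 2) ^ k * Kcoll g (ε * (1 / 64) ^ k) := by gcongr

end ConcentrationGrowth

section QuadraticGrowth

lemma two_pow_mul_le_of_quadratic_growth {y : ℝ → ℝ} {a b κ B : ℝ} (hκ : 0 < κ)
    (hgrowth : ∀ s t, a ≤ s → s < t → t ≤ b → (t - s) * κ * y s ^ 2 ≤ y t)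
    (hB : ∀ t ∈ Icc a b, y t ≤ B) (n : ℕ) {s : ℝ} (hs : a ≤ s) (hys : 0 < y s)
    (hroom : 4 ≤ (b - s) * κ * y s) : 2 ^ n * y s ≤ B := by
  have hsb : s ≤ b := by
    by_contra! hlt
    nlinarith [mul_pos hκ hys]
  induction n generalizing s with
  | zero => simpa using hB s ⟨hs, hsb⟩
  | succ n ih =>
    set h := 2 / (κ * y s)
    have hh : 0 < h := by positivity
    have hhκ : h * (κ * y s) = 2 := div_mul_cancel₀ 2 (by positivity)
    have hend : s + h ≤ b := by
      refine le_of_mul_le_mul_right ?_ (mul_pos hκ hys)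
      linarith
    have hdouble : 2 * y s ≤ y (s + h) :=
      calc 2 * y s = (s + h - s) * κ * y s ^ 2 := by linear_combination -y s * hhκ
        _ ≤ y (s + h) := hgrowth s (s + h) hs (by linarith) hend
    have hroom' : 4 ≤ (b - (s + h)) * κ * y (s + h) :=
      calc (4 : ℝ) ≤ (b - (s + h)) * κ * (2 * y s) := by linarith
        _ ≤ (b - (s + h)) * κ * y (s + h) := by
          gcongr
    calc 2 ^ (n + 1) * y s = 2 ^ n * (2 * y s) := by ring
      _ ≤ 2 ^ n * y (s + h) := by gcongr
      _ ≤ B := ih (by linarith) (by linarith) hroom' hend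

lemma mul_le_four_of_quadratic_growth {y : ℝ → ℝ} {a b κ B : ℝ} (hab : a ≤ b) (hκ : 0 ≤ κ)
    (hgrowth : ∀ s t, a ≤ s → s < t → t ≤ b → (t - s) * κ * y s ^ 2 ≤ y t)
    (hB : ∀ t ∈ Icc a b, y t ≤ B) : (b - a) * κ * y a ≤ 4 := by
  by_contra! hlarge
  have hya : 0 < y a :=
    pos_of_mul_pos_right (zero_lt_four.trans hlarge) (mul_nonneg (sub_nonneg.2 hab) hκ)
  have hκ' : 0 < κ := hκ.lt_of_ne fun h => by simp [← h] at hlarge; linarith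
  obtain ⟨n, hn⟩ := pow_unbounded_of_one_lt (B / y a) one_lt_two
  exact absurd (two_pow_mul_le_of_quadratic_growth hκ' hgrowth hB n le_rfl hya hlarge.le)
    (not_le.2 ((div_lt_iff₀ hya).1 hn))

end QuadraticGrowth

/-- Weak supersolutions on `[0, T]` of the 4-wave kinetic equation without condensate, tested
against the functions `φ_ε` only. A measure on `[0, ∞)` is encoded as a measure on `ℝ`, of which
`N0` and `Kcoll` see the restriction to `[0, ∞)`. -/
structure IsWeakSupersolution (T : ℝ) (g : ℝ → Measure ℝ) : Prop where
  isLocallyFiniteMeasure : ∀ t ∈ Icc 0 T, IsLocallyFiniteMeasure (g t)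
  measure_singleton_zero : ∀ t ∈ Icc 0 T, g t {0} = 0
  integrableOn_wkeKernel : ∀ ε, 0 < ε → ∀ t ∈ Icc 0 T,
    IntegrableOn (wkeKernel ε) (Ioi 0 ×ˢ Ioi 0 ×ˢ Ioi 0) ((g t).prod ((g t).prod (g t)))
  integrableOn_Kcoll : ∀ ε, 0 < ε → IntegrableOn (fun t => Kcoll (g t) ε) (Icc 0 T)
  integral_Kcoll_le : ∀ ε, 0 < ε → ∀ s t, 0 ≤ s → s < t → t ≤ T →
    ∫ τ in s..t, Kcoll (g τ) ε ≤ N0 (g t) ε - N0 (g s) ε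

namespace IsWeakSupersolution

variable {T : ℝ} {g : ℝ → Measure ℝ} {ε A s t : ℝ}

lemma Kcoll_nonneg (hg : IsWeakSupersolution T g) (hε : 0 < ε) (ht : t ∈ Icc 0 T) :
    0 ≤ Kcoll (g t) ε :=
  have := hg.isLocallyFiniteMeasure t ht
  _root_.Kcoll_nonneg hε (hg.integrableOn_wkeKernel ε hε t ht)

lemma N0_le_N0 (hg : IsWeakSupersolution T g) (hε : 0 < ε) (hs : 0 ≤ s) (hst : s ≤ t)
    (ht : t ≤ T) : N0 (g s) ε ≤ N0 (g t) ε := by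
  rcases hst.eq_or_lt with rfl | hlt
  · exact le_rfl
  rw [← sub_nonneg]
  exact (intervalIntegral.integral_nonneg hst fun τ hτ =>
    hg.Kcoll_nonneg hε (Icc_subset_Icc hs ht hτ)).trans
    (hg.integral_Kcoll_le ε hε s t hs hlt ht)

lemma lintegral_Kcoll_le (hg : IsWeakSupersolution T g) (hε : 0 < ε) (hs : 0 ≤ s) (hst : s < t)
    (ht : t ≤ T) : ∫⁻ τ in Ioc s t, ENNReal.ofReal (Kcoll (g τ) ε) ≤
      ENNReal.ofReal (N0 (g t) ε) := by
  have hsub : Ioc s t ⊆ Icc 0 T := Ioc_subset_Icc_self.trans (Icc_subset_Icc hs ht)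
  rw [← ofReal_integral_eq_lintegral_ofReal ((hg.integrableOn_Kcoll ε hε).mono_set hsub)
    ((ae_restrict_mem measurableSet_Ioc).mono fun τ hτ => hg.Kcoll_nonneg hε (hsub hτ)),
    ← intervalIntegral.integral_of_le hst.le]
  exact ENNReal.ofReal_le_ofReal ((hg.integral_Kcoll_le ε hε s t hs hst ht).trans
    (sub_le_self _ (N0_nonneg _ _)))

lemma lintegral_tsum_Kcoll_le (hg : IsWeakSupersolution T g) {δ : ℕ → ℝ}
    (hδ : ∀ k, δ k ∈ Ioc 0 ε) (hs : 0 ≤ s) (hst : s < t) (ht : t ≤ T) :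
    ∫⁻ τ in Ioc s t, ∑' k, ENNReal.ofReal ((1 / 2) ^ k * Kcoll (g τ) (δ k)) ≤
      ENNReal.ofReal (2 * N0 (g t) ε) := by
  have := hg.isLocallyFiniteMeasure t ⟨hs.trans hst.le, ht⟩
  have hsub : Ioc s t ⊆ Icc 0 T := Ioc_subset_Icc_self.trans (Icc_subset_Icc hs ht)
  have hmeas : ∀ k, AEMeasurable (fun τ => Kcoll (g τ) (δ k)) (volume.restrict (Ioc s t)) :=
    fun k => ((hg.integrableOn_Kcoll _ (hδ k).1).mono_set hsub).aemeasurable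
  have hterm : ∀ k, ∫⁻ τ in Ioc s t, ENNReal.ofReal ((1 / 2) ^ k * Kcoll (g τ) (δ k)) ≤
      ENNReal.ofReal ((1 / 2) ^ k * N0 (g t) ε) := by
    intro k
    have hweight : (0 : ℝ) ≤ (1 / 2) ^ k := by positivity
    simp_rw [ENNReal.ofReal_mul hweight]
    rw [lintegral_const_mul' _ _ ENNReal.ofReal_ne_top]
    gcongr
    exact (hg.lintegral_Kcoll_le (hδ k).1 hs hst ht).trans
      (ENNReal.ofReal_le_ofReal (N0_mono (hδ k).1 (hδ k).2))
  calc ∫⁻ τ in Ioc s t, ∑' k, ENNReal.ofReal ((1 / 2) ^ k * Kcoll (g τ) (δ k))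
      = ∑' k, ∫⁻ τ in Ioc s t, ENNReal.ofReal ((1 / 2) ^ k * Kcoll (g τ) (δ k)) :=
        lintegral_tsum fun k => ((hmeas k).const_mul _).ennreal_ofReal
    _ ≤ ∑' k : ℕ, ENNReal.ofReal ((1 / 2) ^ k * N0 (g t) ε) := ENNReal.tsum_le_tsum hterm
    _ = ENNReal.ofReal (2 * N0 (g t) ε) := by
        rw [← ENNReal.ofReal_tsum_of_nonneg
          (fun k => mul_nonneg (by positivity) (N0_nonneg _ _))
          (summable_geometric_two.mul_right _), tsum_mul_right, tsum_geometric_two]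

lemma ofReal_N0_sq_le_tsum_Kcoll (hg : IsWeakSupersolution T g) (hε : 0 < ε) (hA₀ : 0 ≤ A)
    (hA : ∀ δ, 0 < δ → δ ≤ ε → A * √δ ≤ N0 (g 0) δ) (hs : 0 ≤ s) (hst : s ≤ t) (ht : t ≤ T) :
    ENNReal.ofReal (3 / 2 ^ 22 * A / √ε * N0 (g s) ε ^ 2) ≤
      ∑' k : ℕ, ENNReal.ofReal ((1 / 2) ^ k * Kcoll (g t) (ε * (1 / 64) ^ k)) := by
  have htT : t ∈ Icc 0 T := ⟨hs.trans hst, ht⟩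
  have := hg.isLocallyFiniteMeasure t htT
  have hg₀ := hg.measure_singleton_zero t htT
  obtain ⟨k, hk⟩ := exists_mul_measureReal_Ioc_sq_le_Kcoll hg₀ hε hA₀
    (fun δ hδ hδε => (hA δ hδ hδε).trans (hg.N0_le_N0 hδ le_rfl htT.1 ht))
    (fun δ hδ => hg.integrableOn_wkeKernel δ hδ t htT)
  have hmass : N0 (g s) ε ≤ (g t).real (Ioc 0 ε) :=
    (hg.N0_le_N0 hε hs hst ht).trans (N0_le_measureReal_Ioc hg₀ hε)
  refine (ENNReal.ofReal_le_ofReal (le_trans ?_ hk)).trans (ENNReal.le_tsum k)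
  exact mul_le_mul_of_nonneg_left (pow_le_pow_left₀ (N0_nonneg _ _) hmass 2) (by positivity)

lemma N0_quadratic_growth (hg : IsWeakSupersolution T g) (hε : 0 < ε) (hA₀ : 0 ≤ A)
    (hA : ∀ δ, 0 < δ → δ ≤ ε → A * √δ ≤ N0 (g 0) δ) (hs : 0 ≤ s) (hst : s < t) (ht : t ≤ T) :
    (t - s) * (3 / 2 ^ 23 * A / √ε) * N0 (g s) ε ^ 2 ≤ N0 (g t) ε := by
  have hradii : ∀ k : ℕ, ε * (1 / 64) ^ k ∈ Ioc 0 ε := fun k =>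
    ⟨by positivity, mul_le_of_le_one_right hε.le (pow_le_one₀ (by norm_num) (by norm_num))⟩
  have hintegrated : ENNReal.ofReal (3 / 2 ^ 22 * A / √ε * N0 (g s) ε ^ 2 * (t - s)) ≤
      ENNReal.ofReal (2 * N0 (g t) ε) :=
    calc ENNReal.ofReal (3 / 2 ^ 22 * A / √ε * N0 (g s) ε ^ 2 * (t - s))
        = ∫⁻ _ in Ioc s t, ENNReal.ofReal (3 / 2 ^ 22 * A / √ε * N0 (g s) ε ^ 2) := by
          rw [setLIntegral_const, Real.volume_Ioc, ENNReal.ofReal_mul (by positivity)]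
      _ ≤ ∫⁻ τ in Ioc s t,
            ∑' k : ℕ, ENNReal.ofReal ((1 / 2) ^ k * Kcoll (g τ) (ε * (1 / 64) ^ k)) :=
          setLIntegral_mono' measurableSet_Ioc fun τ hτ =>
            hg.ofReal_N0_sq_le_tsum_Kcoll hε hA₀ hA hs hτ.1.le (hτ.2.trans ht)
      _ ≤ ENNReal.ofReal (2 * N0 (g t) ε) := hg.lintegral_tsum_Kcoll_le hradii hs hst ht
  rw [ENNReal.ofReal_le_ofReal_iff (mul_nonneg zero_le_two (N0_nonneg _ _))] at hintegrated
  calc (t - s) * (3 / 2 ^ 23 * A / √ε) * N0 (g s) ε ^ 2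
      = 3 / 2 ^ 22 * A / √ε * N0 (g s) ε ^ 2 * (t - s) / 2 := by ring
    _ ≤ N0 (g t) ε := by linarith

lemma NalphaE_mul_uNe_le (hg : IsWeakSupersolution T g) (hT : 0 < T) (hε : 0 < ε) :
    NalphaE (g 0) (1 / 2) ε * uNe (g 0) (1 / 2) ε ≤ ENNReal.ofReal (2 ^ 25 / 3 / T) := by
  have := hg.isLocallyFiniteMeasure 0 ⟨le_rfl, hT.le⟩
  set A := (uNe (g 0) (1 / 2) ε).toReal
  have hA₀ : 0 ≤ A := ENNReal.toReal_nonneg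
  have hbound : (T - 0) * (3 / 2 ^ 23 * A / √ε) * N0 (g 0) ε ≤ 4 :=
    mul_le_four_of_quadratic_growth (y := fun t => N0 (g t) ε) hT.le (by positivity)
      (fun s t hs hst ht => hg.N0_quadratic_growth hε hA₀
        (fun _ hδ hδε => toReal_uNe_half_mul_sqrt_le_N0 hδ hδε) hs hst ht)
      (fun t ht => hg.N0_le_N0 hε ht.1 ht.2 le_rfl)
  rw [NalphaE_half_eq_ofReal hε, ← ENNReal.ofReal_toReal (uNe_half_ne_top hε),
    ← ENNReal.ofReal_mul (div_nonneg (N0_nonneg _ _) (Real.sqrt_nonneg _))]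
  refine ENNReal.ofReal_le_ofReal ((le_div_iff₀ hT).2 ?_)
  calc N0 (g 0) ε / √ε * A * T
      = 2 ^ 23 / 3 * ((T - 0) * (3 / 2 ^ 23 * A / √ε) * N0 (g 0) ε) := by ring
    _ ≤ 2 ^ 25 / 3 := by linarith

end IsWeakSupersolution

theorem stmt4_general : ∃ C : ℝ, 0 < C ∧
    ∀ T : ℝ, 0 < T → ∀ g : ℝ → Measure ℝ, IsWeakSupersolution T g →
    uNlim (g 0) (1 / 2) = 0 ∨
      oNlim (g 0) (1 / 2) ≤ ENNReal.ofReal C / (ENNReal.ofReal T * uNlim (g 0) (1 / 2)) := by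
  refine ⟨2 ^ 25 / 3, by norm_num, fun T hT g hg => Or.inr ?_⟩
  have hproduct := oNlim_mul_uNlim_le fun ε hε => hg.NalphaE_mul_uNe_le hT (ε := ε) hε
  rw [ENNReal.ofReal_div_of_pos hT, ENNReal.le_div_iff_mul_le
    (Or.inl (ENNReal.ofReal_pos.2 hT).ne') (Or.inl ENNReal.ofReal_ne_top)] at hproduct
  rwa [ENNReal.le_div_iff_mul_le (Or.inr (by positivity)) (Or.inr ENNReal.ofReal_ne_top),
    mul_comm (ENNReal.ofReal T), ← mul_assoc]

theorem stmt4 : ∃ C : ℝ, 0 < C ∧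
    ∀ (T : ℝ), 0 < T → ∀ g : ℝ → Measure ℝ,
    (∀ t ∈ Icc (0:ℝ) T, IsFiniteMeasure (g t)) →
    (∀ t ∈ Icc (0:ℝ) T, g t (Iio (0:ℝ)) = 0) →
    (∀ t ∈ Icc (0:ℝ) T, g t univ = g 0 univ) →
    (∀ t ∈ Icc (0:ℝ) T, g t ({0} : Set ℝ) = 0) →
    (∀ ε : ℝ, 0 < ε →
      (∀ τ ∈ Icc (0:ℝ) T, Integrable (wkeKernel ε)
        (((g τ).prod ((g τ).prod (g τ))).restrict
          ((Ioi (0:ℝ)) ×ˢ ((Ioi (0:ℝ)) ×ˢ (Ioi (0:ℝ)))))) ∧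
      IntegrableOn (fun τ => Kcoll (g τ) ε) (Icc (0:ℝ) T) ∧
      (∀ s t : ℝ, 0 ≤ s → s < t → t ≤ T →
        N0 (g t) ε - N0 (g s) ε = ∫ τ in s..t, Kcoll (g τ) ε)) →
    uNlim (g 0) (1/2) = 0 ∨
      oNlim (g 0) (1/2) ≤ ENNReal.ofReal C / (ENNReal.ofReal T * uNlim (g 0) (1/2)) := by
  obtain ⟨C, hC, hbound⟩ := stmt4_general
  exact ⟨C, hC, fun T hT g hfin _ _ hg₀ hK => hbound T hT g
    ⟨fun t ht => have := hfin t ht; inferInstance, hg₀, fun ε hε => (hK ε hε).1,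
      fun ε hε => (hK ε hε).2.1, fun ε hε s t hs hst ht => ((hK ε hε).2.2 s t hs hst ht).ge⟩⟩
end

section
/- Let C₀ > 0 and let K : ℝ → ℝ be twice continuously differentiable on ℝ∖{0} such that: |K(x)| + |K'(x)| + |K''(x)| ≤ C₀ (1+|x|) e^{x} for x ≤ −2; |K(x)| + |K'(x)| + |K''(x)| ≤ C₀ (1+|x|) e^{−5x/2} for x ≥ 2; |K(x) − π |x|^{−1/2}| ≤ C₀ |x|^{1/2} and |K'(x) + (π/2) sign(x) |x|^{−3/2}| ≤ C₀ |x|^{−1/2} for 0 < |x| ≤ 2. For ξ ∈ ℂ with Im ξ ∈ (−1, 5/2) the integral K̂(ξ) = ∫_ℝ K(x) e^{−ixξ} dx converges absolutely, and for every compact interval I ⊂ (−1, 5/2) there exists C_I > 0 such that |K̂(ξ) − π √(2π) ξ^{−1/2}| ≤ C_I |ξ|^{−1} for all ξ ∈ ℂ with Im ξ ∈ I and Re ξ ≥ 1, where ξ^{−1/2} denotes the principal branch. -/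
open MeasureTheory Set

/-!
On a half-line, the model kernel `c x^{s-1} e^{-βx}` has the explicit Laplace transform
`c Γ(s) (ζ + β)^{-s}`, which differs from `c Γ(s) ζ^{-s}` by `O(|ζ|⁻¹)`. A kernel with the same
singularity minus the model vanishes at `0` and has an integrable derivative, so one integration by
parts bounds its transform by `O(|ζ|⁻¹)`. The Fourier–Laplace transform on the line is the sum of
the two half-line transforms at `ζ = ±iξ`, and `(iξ)^{-s} + (-iξ)^{-s} = 2 cos(πs/2) ξ^{-s}`; at
`s = 1/2` the coefficient `2π Γ(1/2) cos(π/4)` is `π √(2π)`.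
-/

section Laplace

open Filter Asymptotics
open scoped Topology

/-- Absolute convergence of the one-sided Laplace integral of `f` at `ζ`. -/
def LaplaceConvergent (f : ℝ → ℝ) (ζ : ℂ) : Prop :=
  IntegrableOn (fun x : ℝ => (f x : ℂ) * Complex.exp (-(ζ * x))) (Ioi 0)

/-- The one-sided Laplace transform `∫₀^∞ f(x) e^{-ζx} dx`, with junk value `0` where the integral
does not converge absolutely. -/
noncomputable def laplace (f : ℝ → ℝ) (ζ : ℂ) : ℂ :=
  ∫ x : ℝ in Ioi 0, (f x : ℂ) * Complex.exp (-(ζ * x))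

lemma norm_ofReal_mul_cexp_neg_mul (y x : ℝ) (ζ : ℂ) :
    ‖(y : ℂ) * Complex.exp (-(ζ * x))‖ = |y| * Real.exp (-(ζ.re * x)) := by
  simp [Complex.norm_exp]

lemma laplace_sub {f g : ℝ → ℝ} {ζ : ℂ} (hf : LaplaceConvergent f ζ) (hg : LaplaceConvergent g ζ) :
    laplace (fun x => f x - g x) ζ = laplace f ζ - laplace g ζ := by
  simp only [laplace, Complex.ofReal_sub, sub_mul]
  exact integral_sub hf hg

lemma exp_neg_mul_isBigO_one (b : ℝ) :
    (fun x => Real.exp (-(b * x))) =O[𝓝[>] 0] fun _ => (1 : ℝ) := by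
  have hcont : Continuous fun x => Real.exp (-(b * x)) := by fun_prop
  exact ((hcont.tendsto 0).mono_left nhdsWithin_le_nhds).isBigO_one ℝ

lemma laplaceConvergent_of_isBigO {f : ℝ → ℝ} {s b : ℝ} {ζ : ℂ} (hf : ContinuousOn f (Ioi 0))
    (hzero : f =O[𝓝[>] 0] fun x => x ^ (s - 1)) (htop : f =O[atTop] fun x => Real.exp (-b * x))
    (hs : 0 < s) (hζ : -b < ζ.re) : LaplaceConvergent f ζ := by
  let g : ℝ → ℂ := fun x => (f x : ℂ) * Complex.exp (-(ζ * x))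
  have hg : ∀ l, g =O[l] fun x => f x * Real.exp (-(ζ.re * x)) := fun l =>
    .of_bound' <| .of_forall fun x => by
      rw [norm_ofReal_mul_cexp_neg_mul, norm_mul (f x), Real.norm_eq_abs, Real.norm_eq_abs,
        Real.abs_exp]
  have hgc : ContinuousOn g (Ioi 0) :=
    (Complex.continuous_ofReal.comp_continuousOn hf).mul (by fun_prop)
  have hg_top : g =O[atTop] fun x => Real.exp (-(b + ζ.re) * x) := by
    refine (hg _).trans ?_
    refine (htop.mul (isBigO_refl (fun x => Real.exp (-(ζ.re * x))) atTop)).congr_right fun x => ?_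
    rw [← Real.exp_add]
    ring_nf
  have hg_zero : g =O[𝓝[>] 0] (· ^ (-(1 - s))) := by
    refine (hg _).trans ?_
    simpa using hzero.mul (exp_neg_mul_isBigO_one ζ.re)
  have hmellin : MellinConvergent g 1 := mellinConvergent_of_isBigO_rpow_exp (by linarith)
    (hgc.locallyIntegrableOn measurableSet_Ioi) hg_top hg_zero (by simpa using hs)
  simpa only [LaplaceConvergent, MellinConvergent, sub_self, Complex.cpow_zero, one_smul]
    using hmellin

lemma norm_laplace_le {f : ℝ → ℝ} {γ : ℝ} {ζ : ℂ}
    (hf : LaplaceConvergent f (-γ : ℝ)) (hζ : -γ ≤ ζ.re) :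
    ‖laplace f ζ‖ ≤ ∫ x in Ioi 0, |f x| * Real.exp (γ * x) := by
  refine norm_integral_le_of_norm_le (hf.norm.congr (.of_forall fun x => ?_)) ?_
  · simp [Complex.norm_exp]
  · filter_upwards [ae_restrict_mem measurableSet_Ioi] with x (hx : 0 < x)
    rw [norm_ofReal_mul_cexp_neg_mul]
    gcongr
    nlinarith

lemma mul_laplace_eq_laplace_deriv {f : ℝ → ℝ} {ζ : ℂ} (hd : DifferentiableOn ℝ f (Ioi 0))
    (hf : LaplaceConvergent f ζ) (hf' : LaplaceConvergent (deriv f) ζ)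
    (hzero : Tendsto f (𝓝[>] 0) (𝓝 0)) : ζ * laplace f ζ = laplace (deriv f) ζ := by
  have hu : ∀ x ∈ Ioi (0 : ℝ), HasDerivAt (fun x => (f x : ℂ)) ((deriv f x : ℝ) : ℂ) x :=
    fun x hx => ((hd x hx).differentiableAt (Ioi_mem_nhds hx)).hasDerivAt.ofReal_comp
  have hv : ∀ x : ℝ, HasDerivAt (fun x : ℝ => Complex.exp (-(ζ * x)))
      (-ζ * Complex.exp (-(ζ * x))) x := fun x => by
    convert! ((Complex.ofRealCLM.hasDerivAt (x := x)).const_mul ζ).neg.cexp using 1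
    simp [mul_comm]
  have huv' : IntegrableOn ((fun x : ℝ => (f x : ℂ)) * fun x : ℝ => -ζ * Complex.exp (-(ζ * x)))
      (Ioi 0) := by
    refine (hf.const_mul (-ζ)).congr (.of_forall fun x => ?_)
    simp only [Pi.mul_apply]
    ring
  have hlim_zero : Tendsto (fun x : ℝ => (f x : ℂ) * Complex.exp (-(ζ * x))) (𝓝[>] 0) (𝓝 0) := by
    have hexp : Tendsto (fun x : ℝ => Complex.exp (-(ζ * x))) (𝓝[>] 0) (𝓝 1) := by
      have hcont : Continuous fun x : ℝ => Complex.exp (-(ζ * x)) := by fun_prop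
      simpa using (hcont.tendsto 0).mono_left nhdsWithin_le_nhds
    simpa using ((Complex.continuous_ofReal.tendsto 0).comp hzero).mul hexp
  have hlim_top : Tendsto (fun x : ℝ => (f x : ℂ) * Complex.exp (-(ζ * x))) atTop (𝓝 0) :=
    tendsto_zero_of_hasDerivAt_of_integrableOn_Ioi (fun x hx => (hu x hx).mul (hv x))
      (hf'.add huv') hf
  have hparts :=
    integral_Ioi_mul_deriv_eq_deriv_mul hu (fun x _ => hv x) huv' hf' hlim_zero hlim_top
  calc ζ * laplace f ζ = -∫ x : ℝ in Ioi 0, (f x : ℂ) * (-ζ * Complex.exp (-(ζ * x))) := by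
        rw [laplace, ← integral_const_mul, ← integral_neg]
        congr 1 with x
        ring
    _ = laplace (deriv f) ζ := by rw [hparts, sub_zero, zero_sub, neg_neg, laplace]

end Laplace

section GammaIntegral

lemma norm_cpow_mul_cexp_neg_mul {a r : ℂ} {t : ℝ} (ht : 0 < t) :
    ‖(t : ℂ) ^ (a - 1) * Complex.exp (-(r * t))‖ = t ^ (a.re - 1) * Real.exp (-(r.re * t)) := by
  rw [norm_mul, Complex.norm_cpow_eq_rpow_re_of_pos ht, Complex.norm_exp]
  simp

lemma integrableOn_cpow_mul_cexp {a r : ℂ} (ha : 0 < a.re) (hr : 0 < r.re) :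
    IntegrableOn (fun t : ℝ => (t : ℂ) ^ (a - 1) * Complex.exp (-(r * t))) (Ioi 0) := by
  have hdom := integrableOn_rpow_mul_exp_neg_mul_rpow (p := 1) (s := a.re - 1) (b := r.re)
    (by linarith) one_pos hr
  refine Integrable.mono' hdom ?_ ?_
  · refine ContinuousOn.aestronglyMeasurable (fun t ht => ?_) measurableSet_Ioi
    refine ContinuousAt.continuousWithinAt ?_
    refine (Complex.continuousAt_ofReal_cpow_const _ _ (Or.inr (ne_of_gt ht))).mul (by fun_prop)
  · filter_upwards [ae_restrict_mem measurableSet_Ioi] with t ht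
    rw [norm_cpow_mul_cexp_neg_mul ht]
    simp

lemma differentiableOn_integral_cpow_mul_cexp {a : ℂ} (ha : 0 < a.re) :
    DifferentiableOn ℂ (fun r : ℂ => ∫ t : ℝ in Ioi 0, (t : ℂ) ^ (a - 1) * Complex.exp (-(r * t)))
      {r | 0 < r.re} := by
  intro r (hr : 0 < r.re)
  refine DifferentiableAt.differentiableWithinAt ?_
  have hnhds : {z : ℂ | r.re / 2 < z.re} ∈ nhds r :=
    (isOpen_lt continuous_const Complex.continuous_re).mem_nhds (by simp; linarith)
  refine (hasDerivAt_integral_of_dominated_loc_of_deriv_le (μ := volume.restrict (Ioi 0))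
    (F := fun (z : ℂ) (t : ℝ) => (t : ℂ) ^ (a - 1) * Complex.exp (-(z * t)))
    (F' := fun z t => -((t : ℂ) ^ (a + 1 - 1) * Complex.exp (-(z * t))))
    (bound := fun t => t ^ (a.re) * Real.exp (-(r.re / 2) * t ^ (1 : ℝ))) hnhds ?_
    (integrableOn_cpow_mul_cexp ha hr) ?_ ?_ ?_ ?_).2.differentiableAt
  · filter_upwards [hnhds] with z (hz : r.re / 2 < z.re)
    exact (integrableOn_cpow_mul_cexp ha (by linarith)).aestronglyMeasurable
  · exact (integrableOn_cpow_mul_cexp (by simp; linarith) hr).aestronglyMeasurable.neg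
  · filter_upwards [ae_restrict_mem measurableSet_Ioi] with t (ht : 0 < t) z (hz : _ < _)
    rw [norm_neg, norm_cpow_mul_cexp_neg_mul ht, Real.rpow_one]
    simp only [Complex.add_re, Complex.one_re, add_sub_cancel_right]
    gcongr
    nlinarith
  · exact integrableOn_rpow_mul_exp_neg_mul_rpow (by linarith) one_pos (by linarith)
  · filter_upwards [ae_restrict_mem measurableSet_Ioi] with t (ht : 0 < t) z _
    have h0 : (t : ℂ) ≠ 0 := by exact_mod_cast ht.ne'
    convert! (((hasDerivAt_id z).mul_const (t : ℂ)).neg.cexp).const_mul ((t : ℂ) ^ (a - 1)) using 1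
    rw [show a + 1 - 1 = a - 1 + 1 by ring, Complex.cpow_add _ _ h0]
    simp
    ring

lemma integral_cpow_mul_cexp_neg_mul_Ioi {a r : ℂ} (ha : 0 < a.re) (hr : 0 < r.re) :
    ∫ t : ℝ in Ioi 0, (t : ℂ) ^ (a - 1) * Complex.exp (-(r * t)) = r ^ (-a) * Complex.Gamma a := by
  have hopen : IsOpen {z : ℂ | 0 < z.re} := isOpen_lt continuous_const Complex.continuous_re
  have hR : DifferentiableOn ℂ (fun r : ℂ => r ^ (-a) * Complex.Gamma a) {r | 0 < r.re} :=
    fun z (hz : 0 < z.re) => ((differentiableAt_id.cpow_const (Or.inl hz)).mul_const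
      _).differentiableWithinAt
  have hL := differentiableOn_integral_cpow_mul_cexp ha
  refine (hL.analyticOnNhd hopen).eqOn_of_preconnected_of_frequently_eq
    (hR.analyticOnNhd hopen) (convex_halfSpace_re_gt 0).isPreconnected (z₀ := 1) (by simp) ?_ hr
  have hreal : ∀ x : ℝ, 0 < x → ∫ t : ℝ in Ioi 0,
      (t : ℂ) ^ (a - 1) * Complex.exp (-((x : ℂ) * t)) = (x : ℂ) ^ (-a) * Complex.Gamma a := by
    intro x hx
    have harg : (x : ℂ).arg ≠ Real.pi := by
      rw [Complex.arg_ofReal_of_nonneg hx.le]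
      exact Real.pi_ne_zero.symm
    rw [Complex.integral_cpow_mul_exp_neg_mul_Ioi ha hx, one_div, Complex.inv_cpow _ _ harg,
      Complex.cpow_neg]
  have hcast : Filter.Tendsto (fun x : ℝ => (x : ℂ)) (nhdsWithin 1 {1}ᶜ) (nhdsWithin 1 {1}ᶜ) := by
    refine tendsto_nhdsWithin_iff.2 ⟨?_, ?_⟩
    · exact (Complex.continuous_ofReal.tendsto' 1 1 (by simp)).mono_left nhdsWithin_le_nhds
    · filter_upwards [self_mem_nhdsWithin] with x hx
      simpa using hx
  refine hcast.frequently (Filter.Eventually.frequently ?_)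
  filter_upwards [nhdsWithin_le_nhds (Ioi_mem_nhds one_pos)] with x hx using hreal x hx

end GammaIntegral

section PowerExp

open Filter Asymptotics
open scoped Topology

/-- The model kernel `c x^{s-1} e^{-βx}` on the positive half-line, whose Laplace transform is
explicit. -/
noncomputable def powerExp (c s β x : ℝ) : ℝ :=
  c * x ^ (s - 1) * Real.exp (-(β * x))

variable {c s β b x : ℝ}

lemma laplace_powerExp {ζ : ℂ} (hs : 0 < s) (hζ : -β < ζ.re) :
    laplace (powerExp c s β) ζ = ((c * Real.Gamma s : ℝ) : ℂ) * (ζ + β) ^ (-(s : ℂ)) := by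
  calc laplace (powerExp c s β) ζ
      = ∫ x : ℝ in Ioi 0, (c : ℂ) * ((x : ℂ) ^ ((s : ℂ) - 1) * Complex.exp (-((ζ + β) * x))) := by
        refine setIntegral_congr_fun measurableSet_Ioi fun x (hx : 0 < x) => ?_
        have hexp : -((ζ + β) * x) = ((-(β * x) : ℝ) : ℂ) + -(ζ * x) := by push_cast; ring
        simp only [powerExp]
        rw [hexp, Complex.exp_add, Complex.ofReal_mul, Complex.ofReal_mul,
          Complex.ofReal_cpow hx.le, Complex.ofReal_exp]
        push_cast
        ring
    _ = ((c * Real.Gamma s : ℝ) : ℂ) * (ζ + β) ^ (-(s : ℂ)) := by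
        rw [integral_const_mul, integral_cpow_mul_cexp_neg_mul_Ioi (by simpa using hs)
          (by simp; linarith), Complex.Gamma_ofReal]
        push_cast
        ring

lemma hasDerivAt_powerExp (c s β : ℝ) (hx : x ≠ 0) :
    HasDerivAt (powerExp c s β)
      (powerExp (c * (s - 1)) (s - 1) β x - powerExp (β * c) s β x) x := by
  have hexp : HasDerivAt (fun x => Real.exp (-(β * x))) (Real.exp (-(β * x)) * -β) x := by
    simpa using ((hasDerivAt_id x).const_mul β).neg.exp
  convert! ((Real.hasDerivAt_rpow_const (p := s - 1) (Or.inl hx)).const_mul c).mul hexp using 1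
  simp only [powerExp]
  ring

lemma contDiffOn_powerExp {n : WithTop ℕ∞} : ContDiffOn ℝ n (powerExp c s β) (Ioi 0) := by
  refine (contDiffOn_const.mul ?_).mul (by fun_prop)
  exact contDiffOn_id.rpow_const_of_ne fun x hx => ne_of_gt hx

lemma powerExp_isBigO_zero (c s β : ℝ) : powerExp c s β =O[𝓝[>] 0] fun x => x ^ (s - 1) := by
  have hpow := (isBigO_refl (fun x : ℝ => x ^ (s - 1)) (𝓝[>] 0)).const_mul_left c
  exact (hpow.mul (exp_neg_mul_isBigO_one β)).congr_right fun x => mul_one _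

lemma powerExp_sub_isBigO_zero (c s β : ℝ) :
    (fun x => powerExp c s β x - c * x ^ (s - 1)) =O[𝓝[>] 0] fun x => x ^ s := by
  have hexp : (fun x => Real.exp (-(β * x)) - 1) =O[𝓝[>] 0] fun x => x := by
    have hderiv := ((hasDerivAt_id (0 : ℝ)).const_mul β).neg.exp.isBigO_sub
    simpa using hderiv.mono nhdsWithin_le_nhds
  refine (((isBigO_refl (fun x : ℝ => x ^ (s - 1)) _).const_mul_left c).mul hexp).congr' ?_ ?_
  · exact .of_forall fun x => by simp only [powerExp]; ring
  · filter_upwards [self_mem_nhdsWithin] with x (hx : 0 < x)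
    rw [← Real.rpow_add_one hx.ne', sub_add_cancel]

lemma powerExp_isBigO_atTop (c s : ℝ) (hb : b < β) :
    powerExp c s β =O[atTop] fun x => Real.exp (-b * x) := by
  have hpow := (isLittleO_rpow_exp_pos_mul_atTop (s - 1) (sub_pos.2 hb)).isBigO.const_mul_left c
  refine (hpow.mul (isBigO_refl (fun x => Real.exp (-(β * x))) _)).congr_right fun x => ?_
  rw [← Real.exp_add]
  ring_nf

end PowerExp

section HalfLine

open Filter Asymptotics
open scoped Topology

/-- `f` is a `C¹` kernel on the positive half-line with the behaviour of `c x^{s-1}` at `0`, up to a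
relative error `O(x)`, and decays at infinity faster than `e^{-bx}` for every `b < β`; all of this
also holds for the formal derivatives. These are the kernels whose Laplace transform has the leading
term `c Γ(s) ζ^{-s}` in the half-plane `Re ζ > -β`. -/
structure HasPowerExpAsymptotics (f : ℝ → ℝ) (c s β : ℝ) : Prop where
  contDiffOn : ContDiffOn ℝ 1 f (Ioi 0)
  isBigO_zero : (fun x => f x - c * x ^ (s - 1)) =O[𝓝[>] 0] fun x => x ^ s
  isBigO_zero_deriv :
    (fun x => deriv f x - c * (s - 1) * x ^ (s - 2)) =O[𝓝[>] 0] fun x => x ^ (s - 1)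
  isBigO_atTop : ∀ b < β, f =O[atTop] fun x => Real.exp (-b * x)
  isBigO_atTop_deriv : ∀ b < β, deriv f =O[atTop] fun x => Real.exp (-b * x)

lemma hasPowerExpAsymptotics_powerExp (c s β : ℝ) :
    HasPowerExpAsymptotics (powerExp c s β) c s β := by
  have hderiv : ∀ x ∈ Ioi (0 : ℝ), powerExp (c * (s - 1)) (s - 1) β x - powerExp (β * c) s β x =
      deriv (powerExp c s β) x := fun x hx => (hasDerivAt_powerExp c s β (ne_of_gt hx)).deriv.symm
  refine ⟨contDiffOn_powerExp, powerExp_sub_isBigO_zero c s β, ?_,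
    fun b hb => powerExp_isBigO_atTop c s hb, fun b hb => ?_⟩
  · refine ((powerExp_sub_isBigO_zero (c * (s - 1)) (s - 1) β).sub
      (powerExp_isBigO_zero (β * c) s β)).congr' ?_ .rfl
    filter_upwards [self_mem_nhdsWithin] with x hx
    rw [← hderiv x hx, show s - 2 = s - 1 - 1 by ring]
    exact sub_right_comm _ _ _
  · refine ((powerExp_isBigO_atTop (c * (s - 1)) (s - 1) hb).sub
      (powerExp_isBigO_atTop (β * c) s hb)).congr' ?_ .rfl
    filter_upwards [Ioi_mem_atTop 0] using hderiv

namespace HasPowerExpAsymptotics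

variable {f g : ℝ → ℝ} {c c' s β γ : ℝ} {ζ : ℂ}

lemma differentiableAt (h : HasPowerExpAsymptotics f c s β) {x : ℝ} (hx : 0 < x) :
    DifferentiableAt ℝ f x :=
  (h.contDiffOn.contDiffAt (Ioi_mem_nhds hx)).differentiableAt one_ne_zero

lemma sub (hf : HasPowerExpAsymptotics f c s β) (hg : HasPowerExpAsymptotics g c' s β) :
    HasPowerExpAsymptotics (fun x => f x - g x) (c - c') s β := by
  have hderiv : ∀ x ∈ Ioi (0 : ℝ), deriv f x - deriv g x = deriv (fun x => f x - g x) x :=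
    fun x hx => (deriv_fun_sub (hf.differentiableAt hx) (hg.differentiableAt hx)).symm
  refine ⟨hf.contDiffOn.sub hg.contDiffOn, ?_, ?_,
    fun b hb => (hf.isBigO_atTop b hb).sub (hg.isBigO_atTop b hb), fun b hb => ?_⟩
  · exact (hf.isBigO_zero.sub hg.isBigO_zero).congr_left fun x => by ring
  · refine (hf.isBigO_zero_deriv.sub hg.isBigO_zero_deriv).congr' ?_ .rfl
    filter_upwards [self_mem_nhdsWithin] with x hx
    rw [← hderiv x hx]
    ring
  · refine ((hf.isBigO_atTop_deriv b hb).sub (hg.isBigO_atTop_deriv b hb)).congr' ?_ .rfl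
    filter_upwards [Ioi_mem_atTop 0] using hderiv

lemma laplaceConvergent (h : HasPowerExpAsymptotics f c s β) (hs : 0 < s) (hζ : -β < ζ.re) :
    LaplaceConvergent f ζ := by
  obtain ⟨b, hζb, hbβ⟩ := exists_between (neg_lt.1 hζ)
  have hzero : f =O[𝓝[>] 0] fun x => x ^ (s - 1) := by
    have herr : (fun x : ℝ => x ^ s) =O[𝓝[>] 0] fun x => x ^ (s - 1) := by
      have hid : (fun x : ℝ => x) =O[𝓝[>] 0] fun _ => (1 : ℝ) :=
        (tendsto_id.mono_left nhdsWithin_le_nhds).isBigO_one ℝ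
      refine ((isBigO_refl (fun x : ℝ => x ^ (s - 1)) _).mul hid).congr' ?_ ?_
      · filter_upwards [self_mem_nhdsWithin] with x (hx : 0 < x)
        rw [← Real.rpow_add_one hx.ne', sub_add_cancel]
      · exact .of_forall fun x => mul_one _
    simpa using (h.isBigO_zero.trans herr).add ((isBigO_refl _ _).const_mul_left c)
  exact laplaceConvergent_of_isBigO h.contDiffOn.continuousOn hzero (h.isBigO_atTop b hbβ) hs
    (neg_lt.1 hζb)

lemma laplaceConvergent_deriv (h : HasPowerExpAsymptotics f 0 s β) (hs : 0 < s)
    (hζ : -β < ζ.re) : LaplaceConvergent (deriv f) ζ := by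
  obtain ⟨b, hζb, hbβ⟩ := exists_between (neg_lt.1 hζ)
  exact laplaceConvergent_of_isBigO (h.contDiffOn.continuousOn_deriv_of_isOpen isOpen_Ioi le_rfl)
    (by simpa using h.isBigO_zero_deriv) (h.isBigO_atTop_deriv b hbβ) hs (neg_lt.1 hζb)

lemma tendsto_zero (h : HasPowerExpAsymptotics f 0 s β) (hs : 0 < s) :
    Tendsto f (𝓝[>] 0) (𝓝 0) := by
  have hzero : f =O[𝓝[>] 0] fun x => x ^ s := by simpa using h.isBigO_zero
  refine hzero.trans_tendsto ?_
  simpa [Real.zero_rpow hs.ne'] using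
    (Real.continuousAt_rpow_const 0 s (Or.inr hs.le)).tendsto.mono_left nhdsWithin_le_nhds

lemma exists_norm_laplace_le (h : HasPowerExpAsymptotics f 0 s β) (hs : 0 < s) (hγ : γ < β) :
    ∃ M, 0 ≤ M ∧ ∀ ζ : ℂ, -γ ≤ ζ.re → ζ ≠ 0 → ‖laplace f ζ‖ ≤ M * ‖ζ‖⁻¹ := by
  refine ⟨∫ x in Ioi 0, |deriv f x| * Real.exp (γ * x), by positivity, fun ζ hζ hζ0 => ?_⟩
  have hζβ : -β < ζ.re := by linarith
  rw [← div_eq_mul_inv, le_div_iff₀' (norm_pos_iff.2 hζ0), ← norm_mul,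
    mul_laplace_eq_laplace_deriv (fun x hx => (h.differentiableAt hx).differentiableWithinAt)
      (h.laplaceConvergent hs hζβ) (h.laplaceConvergent_deriv hs hζβ) (h.tendsto_zero hs)]
  exact norm_laplace_le (h.laplaceConvergent_deriv hs (by simpa using hγ)) hζ

lemma exists_norm_laplace_sub_add_cpow_le (h : HasPowerExpAsymptotics f c s β) (hs : 0 < s)
    (hγ : γ < β) :
    ∃ M, 0 ≤ M ∧ ∀ ζ : ℂ, -γ ≤ ζ.re → ζ ≠ 0 →
      ‖laplace f ζ - ((c * Real.Gamma s : ℝ) : ℂ) * (ζ + β) ^ (-(s : ℂ))‖ ≤ M * ‖ζ‖⁻¹ := by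
  have hmodel := hasPowerExpAsymptotics_powerExp c s β
  have hdiff := h.sub hmodel
  rw [sub_self] at hdiff
  obtain ⟨M, hM0, hM⟩ := hdiff.exists_norm_laplace_le hs hγ
  refine ⟨M, hM0, fun ζ hζ hζ0 => ?_⟩
  have hζβ : -β < ζ.re := by linarith
  rw [← laplace_powerExp hs hζβ,
    ← laplace_sub (h.laplaceConvergent hs hζβ) (hmodel.laplaceConvergent hs hζβ)]
  exact hM ζ hζ hζ0

end HasPowerExpAsymptotics

end HalfLine

section PowerComparison

lemma inv_norm_add_le {E : Type*} [SeminormedAddCommGroup E] {x y : E} (hx : 0 < ‖x‖)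
    (hxy : 1 ≤ ‖x + y‖) : ‖x + y‖⁻¹ ≤ (1 + ‖y‖) * ‖x‖⁻¹ := by
  have hle : ‖x‖ ≤ (1 + ‖y‖) * ‖x + y‖ := by
    calc ‖x‖ = ‖x + y - y‖ := by rw [add_sub_cancel_right]
      _ ≤ ‖x + y‖ + ‖y‖ := norm_sub_le _ _
      _ ≤ (1 + ‖y‖) * ‖x + y‖ := by nlinarith [norm_nonneg y]
  rwa [← div_eq_mul_inv, le_div_iff₀ hx, inv_mul_le_iff₀' (one_pos.trans_le hxy)]

lemma norm_add_ofReal_cpow_sub_cpow_le {s : ℝ} (hs : 0 ≤ s) (t : ℝ) {ζ : ℂ} (hζ : 1 ≤ |ζ.im|) :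
    ‖(ζ + t) ^ (-(s : ℂ)) - ζ ^ (-(s : ℂ))‖ ≤ s * (1 + |t|) * |t| * ‖ζ‖⁻¹ := by
  have him : ∀ u : ℝ, (ζ + u).im = ζ.im := fun u => by simp
  have hderiv : ∀ u ∈ uIcc 0 t, HasDerivWithinAt (fun u : ℝ => (ζ + u) ^ (-(s : ℂ)))
      (-s * (ζ + u) ^ (-(s : ℂ) - 1)) (uIcc 0 t) u := fun u _ => by
    have hslit : ζ + u ∈ Complex.slitPlane := Or.inr <| by
      rw [him]
      exact abs_pos.1 (one_pos.trans_le hζ)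
    have hcpow := ((hasDerivAt_id (u : ℂ)).const_add ζ).cpow_const (c := -(s : ℂ)) hslit
    simpa using hcpow.comp_ofReal.hasDerivWithinAt
  have hbound : ∀ u ∈ uIcc 0 t,
      ‖-s * (ζ + u) ^ (-(s : ℂ) - 1)‖ ≤ s * (1 + |t|) * ‖ζ‖⁻¹ := fun u hu => by
    have hone : 1 ≤ ‖ζ + u‖ := hζ.trans (him u ▸ Complex.abs_im_le_norm _)
    have hut : |u| ≤ |t| := by simpa using abs_sub_left_of_mem_uIcc hu
    have hinv : ‖ζ + u‖⁻¹ ≤ (1 + |t|) * ‖ζ‖⁻¹ := by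
      have hpos : 0 < ‖ζ‖ := one_pos.trans_le (hζ.trans (Complex.abs_im_le_norm ζ))
      refine (inv_norm_add_le hpos hone).trans ?_
      rw [Complex.norm_real, Real.norm_eq_abs]
      gcongr
    calc ‖-s * (ζ + u) ^ (-(s : ℂ) - 1)‖ = s * ‖ζ + u‖ ^ (-s - 1) := by
          rw [norm_mul, norm_neg, Complex.norm_real, Real.norm_of_nonneg hs,
            ← Complex.norm_cpow_real]
          push_cast
          rfl
      _ ≤ s * ‖ζ + u‖ ^ (-1 : ℝ) := by gcongr; linarith
      _ ≤ s * (1 + |t|) * ‖ζ‖⁻¹ := by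
          rw [Real.rpow_neg_one, mul_assoc]
          gcongr
  calc ‖(ζ + t) ^ (-(s : ℂ)) - ζ ^ (-(s : ℂ))‖ ≤ s * (1 + |t|) * ‖ζ‖⁻¹ * ‖t - 0‖ := by
        simpa using (convex_uIcc 0 t).norm_image_sub_le_of_norm_hasDerivWithin_le hderiv hbound
          left_mem_uIcc right_mem_uIcc
    _ = s * (1 + |t|) * |t| * ‖ζ‖⁻¹ := by
        rw [sub_zero, Real.norm_eq_abs]
        ring

lemma mul_cpow_of_arg_add_arg_mem {x y : ℂ} (hx : x ≠ 0) (hy : y ≠ 0)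
    (h : x.arg + y.arg ∈ Ioc (-Real.pi) Real.pi) (w : ℂ) : (x * y) ^ w = x ^ w * y ^ w := by
  rw [Complex.cpow_def_of_ne_zero (mul_ne_zero hx hy), Complex.cpow_def_of_ne_zero hx,
    Complex.cpow_def_of_ne_zero hy, (Complex.log_mul_eq_add_log_iff hx hy).2 h, add_mul,
    Complex.exp_add]

lemma cpow_I_mul_add_cpow_neg_I_mul {ξ : ℂ} (hξ : 0 < ξ.re) (w : ℂ) :
    (Complex.I * ξ) ^ w + (-(Complex.I * ξ)) ^ w = 2 * Complex.cos (Real.pi * w / 2) * ξ ^ w := by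
  have hξ0 : ξ ≠ 0 := fun h => by simp [h] at hξ
  have harg := abs_lt.1 (Complex.abs_arg_lt_pi_div_two_iff.2 (Or.inl hξ))
  have hI : (Complex.I * ξ) ^ w = Complex.I ^ w * ξ ^ w :=
    mul_cpow_of_arg_add_arg_mem Complex.I_ne_zero hξ0
      (by rw [Complex.arg_I]; constructor <;> linarith) w
  have hnegI : (-Complex.I * ξ) ^ w = (-Complex.I) ^ w * ξ ^ w :=
    mul_cpow_of_arg_add_arg_mem (neg_ne_zero.2 Complex.I_ne_zero) hξ0
      (by rw [Complex.arg_neg_I]; constructor <;> linarith) w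
  rw [← neg_mul, hI, hnegI, ← add_mul, Complex.two_cos,
    Complex.cpow_def_of_ne_zero Complex.I_ne_zero,
    Complex.cpow_def_of_ne_zero (neg_ne_zero.2 Complex.I_ne_zero), Complex.log_I,
    Complex.log_neg_I]
  ring_nf

end PowerComparison

lemma HasPowerExpAsymptotics.exists_norm_laplace_sub_cpow_le {f : ℝ → ℝ} {c s β γ : ℝ}
    (h : HasPowerExpAsymptotics f c s β) (hs : 0 < s) (hγ : γ < β) :
    ∃ M, 0 ≤ M ∧ ∀ ζ : ℂ, -γ ≤ ζ.re → 1 ≤ |ζ.im| →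
      ‖laplace f ζ - ((c * Real.Gamma s : ℝ) : ℂ) * ζ ^ (-(s : ℂ))‖ ≤ M * ‖ζ‖⁻¹ := by
  obtain ⟨M, hM0, hM⟩ := h.exists_norm_laplace_sub_add_cpow_le hs hγ
  refine ⟨M + |c * Real.Gamma s| * (s * (1 + |β|) * |β|), by positivity, fun ζ hre him => ?_⟩
  have hζ0 : ζ ≠ 0 := fun h0 => by norm_num [h0] at him
  set A : ℂ := ((c * Real.Gamma s : ℝ) : ℂ)
  have hcomparison : ‖A * ((ζ + β) ^ (-(s : ℂ)) - ζ ^ (-(s : ℂ)))‖ ≤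
      |c * Real.Gamma s| * (s * (1 + |β|) * |β| * ‖ζ‖⁻¹) := by
    rw [norm_mul, Complex.norm_real, Real.norm_eq_abs]
    gcongr
    exact norm_add_ofReal_cpow_sub_cpow_le hs.le β him
  calc ‖laplace f ζ - A * ζ ^ (-(s : ℂ))‖
      = ‖(laplace f ζ - A * (ζ + β) ^ (-(s : ℂ))) +
          A * ((ζ + β) ^ (-(s : ℂ)) - ζ ^ (-(s : ℂ)))‖ := by
        congr 1
        ring
    _ ≤ M * ‖ζ‖⁻¹ + |c * Real.Gamma s| * (s * (1 + |β|) * |β| * ‖ζ‖⁻¹) :=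
        norm_add_le_of_le (hM ζ hre hζ0) hcomparison
    _ = (M + |c * Real.Gamma s| * (s * (1 + |β|) * |β|)) * ‖ζ‖⁻¹ := by ring

section WholeLine

variable {K : ℝ → ℝ} {ξ : ℂ}

lemma integrableOn_Iic_zero_of_comp_neg {E : Type*} [NormedAddCommGroup E] {f : ℝ → E}
    (h : IntegrableOn (fun x => f (-x)) (Ioi 0)) : IntegrableOn f (Iic 0) := by
  have hIci : IntegrableOn (fun x => f (-x)) (Ici (-0)) := by
    simpa [integrableOn_Ici_iff_integrableOn_Ioi] using h
  simpa using hIci.comp_neg_Iic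

lemma LaplaceConvergent.integrableOn_Ioi (h : LaplaceConvergent K (Complex.I * ξ)) :
    IntegrableOn (fun x : ℝ => (K x : ℂ) * Complex.exp (-(Complex.I * x * ξ))) (Ioi 0) :=
  h.congr (.of_forall fun x => by simp only [mul_right_comm])

lemma LaplaceConvergent.integrableOn_Iic
    (h : LaplaceConvergent (fun x => K (-x)) (-(Complex.I * ξ))) :
    IntegrableOn (fun x : ℝ => (K x : ℂ) * Complex.exp (-(Complex.I * x * ξ))) (Iic 0) :=
  integrableOn_Iic_zero_of_comp_neg <| h.congr <| .of_forall fun x => by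
    simp only [Complex.ofReal_neg, mul_neg, neg_mul, mul_right_comm]

lemma integrable_mul_cexp_of_laplaceConvergent (hpos : LaplaceConvergent K (Complex.I * ξ))
    (hneg : LaplaceConvergent (fun x => K (-x)) (-(Complex.I * ξ))) :
    Integrable (fun x : ℝ => (K x : ℂ) * Complex.exp (-(Complex.I * x * ξ))) := by
  rw [← integrableOn_univ, ← Iic_union_Ioi (a := (0 : ℝ))]
  exact hneg.integrableOn_Iic.union hpos.integrableOn_Ioi

lemma integral_mul_cexp_eq_laplace_add_laplace (hpos : LaplaceConvergent K (Complex.I * ξ))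
    (hneg : LaplaceConvergent (fun x => K (-x)) (-(Complex.I * ξ))) :
    ∫ x : ℝ, (K x : ℂ) * Complex.exp (-(Complex.I * x * ξ)) =
      laplace K (Complex.I * ξ) + laplace (fun x => K (-x)) (-(Complex.I * ξ)) := by
  rw [← intervalIntegral.integral_Iic_add_Ioi hneg.integrableOn_Iic hpos.integrableOn_Ioi,
    add_comm, ← neg_zero, ← integral_comp_neg_Ioi, neg_zero]
  simp only [laplace, Complex.ofReal_neg, mul_neg, neg_mul, mul_right_comm]

end WholeLine

section Bounds

open Filter Asymptotics
open scoped Topology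

lemma isBigO_exp_of_abs_le {f : ℝ → ℝ} {β C b : ℝ} (hb : b < β)
    (hf : ∀ᶠ x in atTop, |f x| ≤ C * (1 + x) * Real.exp (-(β * x))) :
    f =O[atTop] fun x => Real.exp (-b * x) := by
  have hpoly : (fun x => C * (1 + x)) =O[atTop] fun x => Real.exp ((β - b) * x) := by
    have hone := isLittleO_rpow_exp_pos_mul_atTop 0 (sub_pos.2 hb)
    have hid := isLittleO_rpow_exp_pos_mul_atTop 1 (sub_pos.2 hb)
    simpa using (hone.add hid).isBigO.const_mul_left C
  have hf' : f =O[atTop] fun x => C * (1 + x) * Real.exp (-(β * x)) :=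
    .of_norm_eventuallyLE hf
  refine hf'.trans ?_
  refine (hpoly.mul (isBigO_refl (fun x => Real.exp (-(β * x))) _)).congr_right fun x => ?_
  rw [← Real.exp_add]
  ring_nf

lemma HasPowerExpAsymptotics.of_abs_le {f : ℝ → ℝ} {c s β C : ℝ} (hf : ContDiffOn ℝ 1 f (Ioi 0))
    (htop : ∀ x, 2 ≤ x → |f x| + |deriv f x| ≤ C * (1 + x) * Real.exp (-(β * x)))
    (hzero : ∀ x, 0 < x → x ≤ 2 → |f x - c * x ^ (s - 1)| ≤ C * x ^ s ∧
      |deriv f x - c * (s - 1) * x ^ (s - 2)| ≤ C * x ^ (s - 1)) :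
    HasPowerExpAsymptotics f c s β := by
  have hnear : ∀ᶠ x : ℝ in 𝓝[>] 0, 0 < x ∧ x ≤ 2 := Ioc_mem_nhdsGT two_pos
  refine ⟨hf, .of_bound C ?_, .of_bound C ?_, fun b hb => isBigO_exp_of_abs_le (C := C) hb ?_,
    fun b hb => isBigO_exp_of_abs_le (C := C) hb ?_⟩
  · filter_upwards [hnear] with x hx
    rw [Real.norm_eq_abs, Real.norm_of_nonneg (Real.rpow_nonneg hx.1.le _)]
    exact (hzero x hx.1 hx.2).1
  · filter_upwards [hnear] with x hx
    rw [Real.norm_eq_abs, Real.norm_of_nonneg (Real.rpow_nonneg hx.1.le _)]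
    exact (hzero x hx.1 hx.2).2
  · filter_upwards [eventually_ge_atTop 2] with x hx
    linarith [htop x hx, abs_nonneg (deriv f x)]
  · filter_upwards [eventually_ge_atTop 2] with x hx
    linarith [htop x hx, abs_nonneg (f x)]

lemma HasPowerExpAsymptotics.comp_neg_of_abs_le {f : ℝ → ℝ} {c s α C : ℝ}
    (hf : ContDiffOn ℝ 1 f (Iio 0))
    (hbot : ∀ x, x ≤ -2 → |f x| + |deriv f x| ≤ C * (1 + -x) * Real.exp (α * x))
    (hzero : ∀ x, x < 0 → -2 ≤ x → |f x - c * (-x) ^ (s - 1)| ≤ C * (-x) ^ s ∧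
      |deriv f x + c * (s - 1) * (-x) ^ (s - 2)| ≤ C * (-x) ^ (s - 1)) :
    HasPowerExpAsymptotics (fun x => f (-x)) c s α := by
  have hcomp : ContDiffOn ℝ 1 (fun x => f (-x)) (Ioi 0) :=
    hf.comp contDiff_neg.contDiffOn fun x (hx : 0 < x) => neg_lt_zero.2 hx
  refine .of_abs_le (C := C) hcomp (fun x hx => ?_) fun x hx0 hx2 => ?_
  · simpa [deriv_comp_neg] using hbot (-x) (by linarith)
  · obtain ⟨hvalue, hderiv⟩ := hzero (-x) (by linarith) (by linarith)
    rw [neg_neg] at hvalue hderiv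
    refine ⟨hvalue, ?_⟩
    rwa [deriv_comp_neg, ← abs_neg, neg_sub, sub_neg_eq_add, add_comm]

end Bounds

lemma exists_norm_integral_mul_cexp_sub_le {K : ℝ → ℝ} {s α β c a b : ℝ} (hs : 0 < s)
    (hright : HasPowerExpAsymptotics K c s β)
    (hleft : HasPowerExpAsymptotics (fun x => K (-x)) c s α)
    (ha : -α < a) (hb : b < β) :
    ∃ C, 0 < C ∧ ∀ ξ : ℂ, ξ.im ∈ Icc a b → 1 ≤ ξ.re →
      ‖(∫ x : ℝ, (K x : ℂ) * Complex.exp (-(Complex.I * x * ξ))) -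
        ((2 * c * Real.Gamma s * Real.cos (Real.pi * s / 2) : ℝ) : ℂ) * ξ ^ (-(s : ℂ))‖ ≤
          C * ‖ξ‖⁻¹ := by
  obtain ⟨M, hM0, hM⟩ := hright.exists_norm_laplace_sub_cpow_le hs hb
  obtain ⟨N, hN0, hN⟩ := hleft.exists_norm_laplace_sub_cpow_le hs (neg_lt.1 ha)
  refine ⟨M + N + 1, by positivity, fun ξ hξ hre => ?_⟩
  have him : |(Complex.I * ξ).im| = ξ.re := by simp [abs_of_pos (one_pos.trans_le hre)]
  have hboundR := hM (Complex.I * ξ) (by simpa using hξ.2) (him ▸ hre)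
  have hboundL := hN (-(Complex.I * ξ)) (by simpa using hξ.1)
    (by rwa [Complex.neg_im, abs_neg, him])
  rw [integral_mul_cexp_eq_laplace_add_laplace
    (hright.laplaceConvergent hs (by simpa using hξ.2.trans_lt hb))
    (hleft.laplaceConvergent hs (by simpa using ha.trans_le hξ.1))]
  have hbranch : ((2 * c * Real.Gamma s * Real.cos (Real.pi * s / 2) : ℝ) : ℂ) * ξ ^ (-(s : ℂ)) =
      ((c * Real.Gamma s : ℝ) : ℂ) * (Complex.I * ξ) ^ (-(s : ℂ)) +
        ((c * Real.Gamma s : ℝ) : ℂ) * (-(Complex.I * ξ)) ^ (-(s : ℂ)) := by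
    rw [← mul_add, cpow_I_mul_add_cpow_neg_I_mul (one_pos.trans_le hre), mul_neg, neg_div,
      Complex.cos_neg]
    push_cast
    ring
  have hnorm : ‖Complex.I * ξ‖ = ‖ξ‖ := by simp
  rw [hbranch, add_sub_add_comm]
  calc _ ≤ M * ‖ξ‖⁻¹ + N * ‖ξ‖⁻¹ := by
        refine norm_add_le_of_le (hnorm ▸ hboundR) ?_
        rwa [norm_neg, hnorm] at hboundL
    _ ≤ (M + N + 1) * ‖ξ‖⁻¹ := by
        rw [← add_mul]
        exact mul_le_mul_of_nonneg_right (le_add_of_nonneg_right zero_le_one) (by positivity)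

theorem stmt9_general {K : ℝ → ℝ} {s α β c C₀ : ℝ} (hs : 0 < s)
    (hsm : ContDiffOn ℝ 1 K {0}ᶜ)
    (hneg : ∀ x, x ≤ -2 → |K x| + |deriv K x| ≤ C₀ * (1 + |x|) * Real.exp (α * x))
    (hpos : ∀ x, 2 ≤ x → |K x| + |deriv K x| ≤ C₀ * (1 + |x|) * Real.exp (-(β * x)))
    (h0 : ∀ x, x ≠ 0 → |x| ≤ 2 → |K x - c * |x| ^ (s - 1)| ≤ C₀ * |x| ^ s ∧
      |deriv K x - c * (s - 1) * Real.sign x * |x| ^ (s - 2)| ≤ C₀ * |x| ^ (s - 1)) :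
    (∀ ξ : ℂ, ξ.im ∈ Ioo (-α) β →
      Integrable (fun x : ℝ => (K x : ℂ) * Complex.exp (-(Complex.I * x * ξ)))) ∧
    (∀ a b : ℝ, -α < a → b < β →
      ∃ C, 0 < C ∧ ∀ ξ : ℂ, ξ.im ∈ Icc a b → 1 ≤ ξ.re →
        ‖(∫ x : ℝ, (K x : ℂ) * Complex.exp (-(Complex.I * x * ξ))) -
          ((2 * c * Real.Gamma s * Real.cos (Real.pi * s / 2) : ℝ) : ℂ) * ξ ^ (-(s : ℂ))‖ ≤
            C * ‖ξ‖⁻¹) := by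
  have hright : HasPowerExpAsymptotics K c s β := by
    refine .of_abs_le (C := C₀) (hsm.mono fun x hx => ne_of_gt hx) (fun x hx => ?_)
      fun x hx0 hx2 => ?_
    · simpa only [abs_of_nonneg (zero_le_two.trans hx)] using hpos x hx
    · simpa only [abs_of_pos hx0, Real.sign_of_pos hx0, mul_one] using
        h0 x hx0.ne' (by rwa [abs_of_pos hx0])
  have hleft : HasPowerExpAsymptotics (fun x => K (-x)) c s α := by
    refine .comp_neg_of_abs_le (C := C₀) (hsm.mono fun x hx => ne_of_lt hx) (fun x hx => ?_)
      fun x hx0 hx2 => ?_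
    · simpa only [abs_of_nonpos (show x ≤ 0 by linarith)] using hneg x hx
    · simpa only [abs_of_neg hx0, Real.sign_of_neg hx0, mul_neg_one, neg_mul, sub_neg_eq_add]
        using h0 x hx0.ne (by rw [abs_of_neg hx0]; linarith)
  refine ⟨fun ξ hξ => ?_, fun a b => exists_norm_integral_mul_cexp_sub_le hs hright hleft⟩
  exact integrable_mul_cexp_of_laplaceConvergent
    (hright.laplaceConvergent hs (by simpa using hξ.2))
    (hleft.laplaceConvergent hs (by simpa using hξ.1))

lemma two_mul_pi_mul_Gamma_one_half_mul_cos :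
    2 * Real.pi * Real.Gamma (1 / 2) * Real.cos (Real.pi * (1 / 2) / 2) =
      Real.pi * Real.sqrt (2 * Real.pi) := by
  rw [show Real.pi * (1 / 2) / 2 = Real.pi / 4 by ring, Real.cos_pi_div_four,
    Real.Gamma_one_half_eq, Real.sqrt_mul zero_le_two]
  ring

theorem stmt9 (C₀ : ℝ) (hC₀ : 0 < C₀) (K : ℝ → ℝ)
    (hsm : ContDiffOn ℝ 2 K ({(0:ℝ)}ᶜ))
    (hneg : ∀ x : ℝ, x ≤ -2 →
      |K x| + |deriv K x| + |deriv (deriv K) x| ≤ C₀ * (1 + |x|) * Real.exp x)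
    (hpos : ∀ x : ℝ, 2 ≤ x →
      |K x| + |deriv K x| + |deriv (deriv K) x| ≤ C₀ * (1 + |x|) * Real.exp (-(5 * x) / 2))
    (h0 : ∀ x : ℝ, x ≠ 0 → |x| ≤ 2 →
      |K x - Real.pi * |x| ^ (-(1/2) : ℝ)| ≤ C₀ * |x| ^ ((1/2) : ℝ) ∧
      |deriv K x + Real.pi / 2 * Real.sign x * |x| ^ (-(3/2) : ℝ)| ≤
        C₀ * |x| ^ (-(1/2) : ℝ)) :
    -- the Fourier–Laplace transform converges absolutely in the strip `Im ξ ∈ (-1, 5/2)`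
    (∀ ξ : ℂ, ξ.im ∈ Ioo (-1 : ℝ) (5/2) →
      Integrable (fun x : ℝ => (K x : ℂ) * Complex.exp (-(Complex.I * x * ξ)))) ∧
    -- the asymptotic expansion `K̂(ξ) = π √(2π) ξ^{-1/2} + O(|ξ|⁻¹)`
    (∀ a b : ℝ, a ≤ b → Icc a b ⊆ Ioo (-1 : ℝ) (5/2) →
      ∃ C_I : ℝ, 0 < C_I ∧ ∀ ξ : ℂ, ξ.im ∈ Icc a b → 1 ≤ ξ.re →
        ‖(∫ x : ℝ, (K x : ℂ) * Complex.exp (-(Complex.I * x * ξ))) -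
            (Real.pi * Real.sqrt (2 * Real.pi) : ℂ) * ξ ^ (-(1/2) : ℂ)‖ ≤
          C_I * ‖ξ‖⁻¹) := by
  obtain ⟨hint, hasymp⟩ := stmt9_general (K := K) (s := 1 / 2) (α := 1) (β := 5 / 2)
    (c := Real.pi) (C₀ := C₀) one_half_pos (hsm.of_le one_le_two)
    (fun x hx => by
      rw [one_mul]
      linarith [hneg x hx, abs_nonneg (deriv (deriv K) x)])
    (fun x hx => by
      rw [div_mul_eq_mul_div, ← neg_div]
      linarith [hpos x hx, abs_nonneg (deriv (deriv K) x)])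
    (fun x hx hx2 => by
      rw [show (1 / 2 : ℝ) - 1 = -(1 / 2) by norm_num, show (1 / 2 : ℝ) - 2 = -(3 / 2) by norm_num,
        mul_neg, mul_one_div, neg_mul, neg_mul, sub_neg_eq_add]
      exact h0 x hx hx2)
  refine ⟨hint, fun a b hab hI => ?_⟩
  have h := hasymp a b (hI (left_mem_Icc.2 hab)).1 (hI (right_mem_Icc.2 hab)).2
  rw [two_mul_pi_mul_Gamma_one_half_mul_cos] at h
  simpa using h
end
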